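/- arXiv:1311.1488 — 3 statements merged into one kernel-verified Lean document; each statement's English description precedes it below -/
import Mathlib

section
/- Pointwise on the underlying probability space: for every n ≥ 0, X_1(n) ≤ X_N(n), and for every n ≥ ⌈log₂ N⌉, X_N(n − ⌈log₂ N⌉) ≤ X_1(n). -/
open MeasureTheory ProbabilityTheory Real Filter Set

noncomputable section

/-- One step of the `N`-BRW: each of the `N` particles branches into two, the children jump
according to `jump`, and only the `N` right-most particles are kept; the result is the
sorted (ascending) vector of the `N` retained positions. -/
def brwStep (N : ℕ) (pos : Fin N → ℝ) (jump : Fin N → Fin 2 → ℝ) : Fin N → ℝ := fun i =>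
  (((Finset.univ : Finset (Fin N × Fin 2)).val.map fun p => pos p.1 + jump p.1 p.2).sort
      (· ≤ ·)).getD (N + i) 0

/-- The `N`-BRW started from the sorted configuration `x0`, driven by the jumps `jump`:
`brw N x0 jump n i` is the position `X_{i+1}(n)` of the `(i+1)`-th lowest particle at time `n`. -/
def brw (N : ℕ) (x0 : Fin N → ℝ) (jump : ℕ → Fin N → Fin 2 → ℝ) : ℕ → Fin N → ℝ
  | 0 => x0
  | n + 1 => brwStep N (brw N x0 jump n) (jump n)

/-- Position `X_N(n)` of the right-most particle of the `N`-BRW started at the origin. -/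
def brwMax (N : ℕ) (jump : ℕ → Fin N → Fin 2 → ℝ) (n : ℕ) : ℝ :=
  ⨆ i, brw N (fun _ => 0) jump n i

/-- Position `X_1(n)` of the left-most particle of the `N`-BRW started at the origin. -/
def brwMin (N : ℕ) (jump : ℕ → Fin N → Fin 2 → ℝ) (n : ℕ) : ℝ :=
  ⨅ i, brw N (fun _ => 0) jump n i

/-! The children of the particles at or above a level `c` are again at or above `c`, because jumps
are nonnegative; selection keeps the highest children, so it loses such a child only when all `N`
survivors are at or above `c`. Hence the number of particles at or above `c` at least doubles at
each step until it reaches `N`. When `c` is the position of some particle, this number is initially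
at least one, so `⌈log₂ N⌉` steps suffice. -/

/-- The number of values of `f` that are at least `c`. For a configuration of particles this is the
population at or above the level `c`, the quantity that doubles at each step of the `N`-BRW. -/
def numAbove {ι α : Type*} [Fintype ι] [LE α] [DecidableLE α] (f : ι → α) (c : α) : ℕ :=
  (Finset.univ.filter fun i => c ≤ f i).card

/-- The positions of the `2N` children before selection, indexed by parent and birth order. -/
def offspring {N : ℕ} (pos : Fin N → ℝ) (jump : Fin N → Fin 2 → ℝ) : Fin N × Fin 2 → ℝ :=
  fun p => pos p.1 + jump p.1 p.2

theorem countP_drop_of_sorted {α : Type*} [Preorder α] [DecidableLE α] {l : List α}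
    (hl : l.Pairwise (· ≤ ·)) (c : α) (k : ℕ) :
    (l.drop k).countP (c ≤ ·) = min (l.length - k) (l.countP (c ≤ ·)) := by
  have hsplit : l.countP (c ≤ ·) = (l.take k).countP (c ≤ ·) + (l.drop k).countP (c ≤ ·) := by
    rw [← List.countP_append, List.take_append_drop]
  have hlength : (l.drop k).countP (c ≤ ·) ≤ l.length - k :=
    List.countP_le_length.trans_eq List.length_drop
  by_cases hlow : ∃ x ∈ l.take k, c ≤ x
  · obtain ⟨x, hx, hcx⟩ := hlow
    rw [← List.take_append_drop k l, List.pairwise_append] at hl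
    have hall : (l.drop k).countP (c ≤ ·) = (l.drop k).length :=
      List.countP_eq_length.2 fun y hy => decide_eq_true (hcx.trans (hl.2.2 x hx y hy))
    rw [List.length_drop] at hall
    omega
  · have hnone : (l.take k).countP (c ≤ ·) = 0 :=
      List.countP_eq_zero.2 fun x hx hcx => hlow ⟨x, hx, of_decide_eq_true hcx⟩
    omega

section NumAbove

variable {ι α : Type*} [Fintype ι]

theorem countP_map_univ_val [LE α] [DecidableLE α] (f : ι → α) (c : α) :
    ((Finset.univ : Finset ι).val.map f).countP (c ≤ ·) = numAbove f c :=
  Multiset.countP_map _ _ _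

theorem numAbove_self_pos [Preorder α] [DecidableLE α] (f : ι → α) (i : ι) :
    0 < numAbove f (f i) :=
  Finset.card_pos.2 ⟨i, Finset.mem_filter.2 ⟨Finset.mem_univ i, le_rfl⟩⟩

theorem le_of_card_le_numAbove [LE α] [DecidableLE α] {f : ι → α} {c : α}
    (h : Fintype.card ι ≤ numAbove f c) (i : ι) : c ≤ f i :=
  Finset.card_filter_eq_iff.1 (h.antisymm' (Finset.card_le_univ _)) i (Finset.mem_univ i)

end NumAbove

theorem two_mul_numAbove_le_numAbove_offspring {N : ℕ} (pos : Fin N → ℝ)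
    {jump : Fin N → Fin 2 → ℝ} (hjump : ∀ i j, 0 ≤ jump i j) (c : ℝ) :
    2 * numAbove pos c ≤ numAbove (offspring pos jump) c := by
  have hsub : (Finset.univ.filter fun i => c ≤ pos i) ×ˢ (Finset.univ : Finset (Fin 2)) ⊆
      Finset.univ.filter fun p => c ≤ offspring pos jump p := by
    intro p hp
    have hparent : c ≤ pos p.1 := (Finset.mem_filter.1 (Finset.mem_product.1 hp).1).2
    exact Finset.mem_filter.2
      ⟨Finset.mem_univ p, hparent.trans (le_add_of_nonneg_right (hjump p.1 p.2))⟩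
  calc 2 * numAbove pos c
      = ((Finset.univ.filter fun i => c ≤ pos i) ×ˢ (Finset.univ : Finset (Fin 2))).card := by
        rw [Finset.card_product, Finset.card_fin, mul_comm, numAbove]
    _ ≤ numAbove (offspring pos jump) c := Finset.card_le_card hsub

theorem length_sort_offspring {N : ℕ} (pos : Fin N → ℝ) (jump : Fin N → Fin 2 → ℝ) :
    ((Finset.univ.val.map (offspring pos jump)).sort (· ≤ ·)).length = N * 2 := by
  simp

theorem ofFn_brwStep {N : ℕ} (pos : Fin N → ℝ) (jump : Fin N → Fin 2 → ℝ) :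
    List.ofFn (brwStep N pos jump) =
      ((Finset.univ.val.map (offspring pos jump)).sort (· ≤ ·)).drop N := by
  have hlength := length_sort_offspring pos jump
  refine List.ext_getElem ?_ fun i _ hi => ?_
  · rw [List.length_ofFn, List.length_drop]
    omega
  · rw [List.length_drop] at hi
    rw [List.getElem_ofFn, List.getElem_drop]
    exact List.getD_eq_getElem _ _ (Nat.add_lt_of_lt_sub' hi)

theorem numAbove_brwStep {N : ℕ} (pos : Fin N → ℝ) (jump : Fin N → Fin 2 → ℝ) (c : ℝ) :
    numAbove (brwStep N pos jump) c = min N (numAbove (offspring pos jump) c) := by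
  set children := Finset.univ.val.map (offspring pos jump)
  have hlength : (children.sort (· ≤ ·)).length - N = N := by
    rw [length_sort_offspring, mul_two, Nat.add_sub_cancel]
  have hcount : (children.sort (· ≤ ·)).countP (c ≤ ·) = numAbove (offspring pos jump) c := by
    rw [← countP_map_univ_val, ← Multiset.coe_countP, Multiset.sort_eq]
  rw [← countP_map_univ_val, Fin.univ_val_map, Multiset.coe_countP, ofFn_brwStep,
    countP_drop_of_sorted (Multiset.pairwise_sort _ _), hlength, hcount]

section Iterate

variable {N : ℕ} (x0 : Fin N → ℝ) {jump : ℕ → Fin N → Fin 2 → ℝ}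

theorem min_two_pow_mul_numAbove_le_numAbove_brw_add (hjump : ∀ n i j, 0 ≤ jump n i j)
    (c : ℝ) (n k : ℕ) :
    min N (2 ^ k * numAbove (brw N x0 jump n) c) ≤ numAbove (brw N x0 jump (n + k)) c := by
  induction k with
  | zero => simp
  | succ k ih =>
    have hdouble := two_mul_numAbove_le_numAbove_offspring (brw N x0 jump (n + k))
      (hjump (n + k)) c
    rw [← Nat.add_assoc, brw, numAbove_brwStep, pow_succ', mul_assoc]
    omega

theorem brw_le_brw_add (hjump : ∀ n i j, 0 ≤ jump n i j) {k : ℕ} (hk : N ≤ 2 ^ k) (n : ℕ)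
    (i j : Fin N) : brw N x0 jump n i ≤ brw N x0 jump (n + k) j := by
  have hfull : N ≤ 2 ^ k * numAbove (brw N x0 jump n) (brw N x0 jump n i) :=
    hk.trans (Nat.le_mul_of_pos_right _ (numAbove_self_pos _ i))
  have hgrowth := min_two_pow_mul_numAbove_le_numAbove_brw_add x0 hjump (brw N x0 jump n i) n k
  rw [min_eq_left hfull] at hgrowth
  exact le_of_card_le_numAbove ((Fintype.card_fin N).trans_le hgrowth) j

end Iterate

theorem stmt_8_general {N : ℕ} (hN : 1 ≤ N) (x0 : Fin N → ℝ) {jump : ℕ → Fin N → Fin 2 → ℝ}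
    (hjump : ∀ n i j, 0 ≤ jump n i j) :
    (∀ n : ℕ, (⨅ i, brw N x0 jump n i) ≤ ⨆ i, brw N x0 jump n i) ∧
    (∀ n : ℕ, Nat.clog 2 N ≤ n →
      (⨆ i, brw N x0 jump (n - Nat.clog 2 N) i) ≤ ⨅ i, brw N x0 jump n i) := by
  have : Nonempty (Fin N) := ⟨⟨0, hN⟩⟩
  refine ⟨fun n => ciInf_le_ciSup (Set.finite_range _).bddBelow (Set.finite_range _).bddAbove,
    fun n hn => ciSup_le fun i => le_ciInf fun j => ?_⟩
  have hle := brw_le_brw_add x0 hjump (Nat.le_pow_clog one_lt_two N) (n - Nat.clog 2 N) i j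
  rwa [Nat.sub_add_cancel hn] at hle

/-- pointwise on the underlying probability space, `X_1(n) ≤ X_N(n)` for every
`n ≥ 0`, and `X_N(n − ⌈log₂ N⌉) ≤ X_1(n)` for every `n ≥ ⌈log₂ N⌉`. -/
theorem stmt_8 {Ω : Type*} [MeasurableSpace Ω] (P : Measure Ω) [IsProbabilityMeasure P]
    (X : Ω → ℝ) (hXmeas : Measurable X) (hXpos : ∀ ω, 0 ≤ X ω)
    (N : ℕ) (hN : 1 ≤ N)
    (ξ : ℕ → Fin N → Fin 2 → Ω → ℝ)
    (hξmeas : ∀ n i j, Measurable (ξ n i j))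
    (hξpos : ∀ n i j ω, 0 ≤ ξ n i j ω)
    (hξdist : ∀ n i j, Measure.map (ξ n i j) P = Measure.map X P)
    (hξindep : iIndepFun
      (fun p : ℕ × Fin N × Fin 2 => ξ p.1 p.2.1 p.2.2) P)
    (ω : Ω) :
    (∀ n : ℕ, brwMin N (fun k i j => ξ k i j ω) n ≤ brwMax N (fun k i j => ξ k i j ω) n) ∧
    (∀ n : ℕ, Nat.clog 2 N ≤ n →
      brwMax N (fun k i j => ξ k i j ω) (n - Nat.clog 2 N) ≤
        brwMin N (fun k i j => ξ k i j ω) n) :=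
  stmt_8_general hN (fun _ => 0) fun n i j => hξpos n i j ω

end
end

section
/- For every integer n ≥ 0, define ξ^n by ξ^n_t = ξ_t for t > n and ξ^n_t = 0 for t ≤ n, and let R_{ξ^n} be its stairs functional. Then for all integers 0 ≤ n ≤ m, R_ξ(m) ≤ R_ξ(n) + R_{ξ^n}(m). -/
open MeasureTheory Real Filter Set

noncomputable section

/-- Auxiliary construction of the stairs functional: `stairsAux ξ n` agrees with `R_ξ` on
`(-∞, n]`; on `(n-1, n]` it is given by the defining recursion
`R_ξ(t) = sup_{s ∈ [0,1]} (R_ξ(t−s−1) + ξ(t−s))`. -/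
def stairsAux (ξ : ℝ → ℝ) : ℕ → ℝ → ℝ
  | 0, _ => 0
  | n + 1, t =>
    if t ≤ n then stairsAux ξ n t
    else ⨆ s : Set.Icc (0 : ℝ) 1, (stairsAux ξ n (t - (s : ℝ) - 1) + ξ (t - (s : ℝ)))

/-- The stairs functional `R_ξ`: `R_ξ(t) = 0` for `t ≤ 0` and, inductively for `t ∈ (n, n+1]`,
`R_ξ(t) = sup_{s ∈ [0,1]} (R_ξ(t−s−1) + ξ(t−s))`. -/
def stairs (ξ : ℝ → ℝ) (t : ℝ) : ℝ :=
  stairsAux ξ ⌈t⌉₊ t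

/-!
Read the recursion as a climb ending at `t`: the last step is at some `u ∈ [t - 1, t]`, gains `ξ u`
and leaves `R (u - 1)` to be collected before it. To compare `R_ξ t` with `R_ξ a + R_{ξ^a} t`,
induct on `t` in unit steps. A last step `u > a` gains the same for `ξ` and for its truncation
`ξ^a`, and the rest of the climb is handled by induction. If the last step is at `u ≤ a`, the whole
climb is worth at most `R_ξ u`, hence at most `R_ξ a` by monotonicity.
-/

theorem real_unit_step_induction {P : ℝ → Prop} (nonpos : ∀ t ≤ 0, P t)
    (step : ∀ t, 0 < t → (∀ s ≤ t - 1, P s) → P t) (t : ℝ) : P t := by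
  suffices h : ∀ n : ℕ, ∀ t ≤ (n : ℝ), P t from
    let ⟨n, hn⟩ := exists_nat_ge t
    h n t hn
  intro n
  induction n with
  | zero => exact fun t ht => nonpos t (by simpa using ht)
  | succ n ih =>
    intro t ht
    push_cast at ht
    rcases le_or_gt t 0 with ht0 | ht0
    · exact nonpos t ht0
    · exact step t ht0 fun s hs => ih s (by linarith)

theorem bddAbove_image_of_finite_superlevel {α β : Type*} [LinearOrder β] {f : α → β} {s : Set α}
    {a : β} (hfin : {x ∈ s | a ≤ f x}.Finite) : BddAbove (f '' s) := by
  have : Nonempty β := ⟨a⟩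
  refine ((hfin.image f).bddAbove.union bddAbove_Iic).mono (t := _ ∪ Iic a) ?_
  rintro _ ⟨x, hx, rfl⟩
  exact (le_total a (f x)).imp (fun hax => mem_image_of_mem f ⟨hx, hax⟩) id

theorem bddAbove_image_Iic_of_finite_superlevel {ξ : ℝ → ℝ} {a c : ℝ} (ha : 0 < a)
    (hfin : {t | t ∈ Icc 0 c ∧ a ≤ ξ t}.Finite) (hzero : ∀ t ≤ 0, ξ t = 0) :
    BddAbove (ξ '' Iic c) := by
  refine bddAbove_image_of_finite_superlevel (a := a) (hfin.subset ?_)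
  rintro t ⟨htc, hat⟩
  have ht : 0 ≤ t := le_of_not_ge fun ht => by linarith [hzero t ht]
  exact ⟨⟨ht, htc⟩, hat⟩

section Recursion

variable {ξ : ℝ → ℝ} {t u : ℝ}

theorem stairsAux_eq_stairs (n : ℕ) (ht : t ≤ n) : stairsAux ξ n t = stairs ξ t := by
  induction n with
  | zero => rw [stairs, Nat.ceil_eq_zero.2 (by simpa using ht)]
  | succ n ih =>
    by_cases htn : t ≤ n
    · rw [stairsAux, if_pos htn, ih htn]
    · have hceil : ⌈t⌉₊ = n + 1 :=
        (Nat.ceil_eq_iff n.succ_ne_zero).2 ⟨by simpa using htn, ht⟩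
      rw [stairs, hceil]

theorem stairs_of_nonpos (ht : t ≤ 0) : stairs ξ t = 0 := by
  rw [stairs, Nat.ceil_eq_zero.2 ht, stairsAux]

theorem stairs_of_pos (ht : 0 < t) :
    stairs ξ t = ⨆ s : Icc (0 : ℝ) 1, (stairs ξ (t - s - 1) + ξ (t - s)) := by
  obtain ⟨n, hn⟩ := Nat.exists_eq_succ_of_ne_zero (Nat.ceil_pos.2 ht).ne'
  have hnt : (n : ℝ) < t := Nat.lt_ceil.1 (by omega)
  have htn : t ≤ n + 1 := by exact_mod_cast Nat.ceil_le.1 hn.le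
  rw [stairs, hn, stairsAux, if_neg hnt.not_ge]
  refine iSup_congr fun s => ?_
  rw [stairsAux_eq_stairs n (by linarith [s.2.1])]

theorem stairs_le_of_forall {M : ℝ} (ht : 0 < t)
    (hM : ∀ u ∈ Icc (t - 1) t, stairs ξ (u - 1) + ξ u ≤ M) : stairs ξ t ≤ M := by
  rw [stairs_of_pos ht]
  exact ciSup_le fun s => hM _ ⟨by linarith [s.2.2], by linarith [s.2.1]⟩

theorem stairs_nonneg (hnonneg : ∀ t, 0 ≤ ξ t) (t : ℝ) : 0 ≤ stairs ξ t := by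
  induction t using real_unit_step_induction with
  | nonpos t ht => exact (stairs_of_nonpos ht).ge
  | step t ht ih =>
    rw [stairs_of_pos ht]
    exact Real.iSup_nonneg fun s => add_nonneg (ih _ (by linarith [s.2.1])) (hnonneg _)

theorem bddAbove_stairs_image_Iic (hbdd : ∀ c, BddAbove (ξ '' Iic c)) (c : ℝ) :
    BddAbove (stairs ξ '' Iic c) := by
  induction c using real_unit_step_induction with
  | nonpos c hc =>
    refine ⟨0, forall_mem_image.2 fun t ht => ?_⟩
    exact (stairs_of_nonpos (le_trans ht hc)).le
  | step c _ ih =>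
    obtain ⟨B, hB⟩ := ih (c - 1) le_rfl
    obtain ⟨C, hC⟩ := hbdd c
    refine ⟨max 0 (B + C), forall_mem_image.2 fun t (htc : t ≤ c) => ?_⟩
    rcases le_or_gt t 0 with ht | ht
    · exact (stairs_of_nonpos ht).trans_le (le_max_left _ _)
    · refine (stairs_le_of_forall ht fun u hu => ?_).trans (le_max_right _ _)
      have huc : u ≤ c := hu.2.trans htc
      exact add_le_add (hB (mem_image_of_mem _ (sub_le_sub_right huc 1)))
        (hC (mem_image_of_mem _ huc))

theorem stairs_sub_one_add_le (hbdd : ∀ c, BddAbove (ξ '' Iic c)) (ht : 0 < t)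
    (hu : u ∈ Icc (t - 1) t) : stairs ξ (u - 1) + ξ u ≤ stairs ξ t := by
  obtain ⟨B, hB⟩ := bddAbove_stairs_image_Iic hbdd (t - 1)
  obtain ⟨C, hC⟩ := hbdd t
  have hrange : BddAbove (range fun s : Icc (0 : ℝ) 1 => stairs ξ (t - s - 1) + ξ (t - s)) := by
    refine ⟨B + C, forall_mem_range.2 fun s => ?_⟩
    have hst : t - s ≤ t := sub_le_self t s.2.1
    exact add_le_add (hB (mem_image_of_mem _ (sub_le_sub_right hst 1)))
      (hC (mem_image_of_mem _ hst))
  rw [stairs_of_pos ht]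
  simpa using le_ciSup hrange ⟨t - u, by linarith [hu.2], by linarith [hu.1]⟩

theorem stairs_sub_one_add_le_self (hbdd : ∀ c, BddAbove (ξ '' Iic c))
    (hzero : ∀ t ≤ 0, ξ t = 0) (u : ℝ) : stairs ξ (u - 1) + ξ u ≤ stairs ξ u := by
  rcases le_or_gt u 0 with hu | hu
  · simp [stairs_of_nonpos hu, stairs_of_nonpos (show u - 1 ≤ 0 by linarith), hzero u hu]
  · exact stairs_sub_one_add_le hbdd hu ⟨by linarith, le_rfl⟩

end Recursion

section Comparison

variable {ξ η : ℝ → ℝ}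

theorem monotone_stairs (hnonneg : ∀ t, 0 ≤ ξ t) (hzero : ∀ t ≤ 0, ξ t = 0)
    (hbdd : ∀ c, BddAbove (ξ '' Iic c)) : Monotone (stairs ξ) := by
  intro a b hab
  induction b using real_unit_step_induction generalizing a with
  | nonpos b hb => rw [stairs_of_nonpos hb, stairs_of_nonpos (hab.trans hb)]
  | step b hb ih =>
    rcases le_or_gt a 0 with ha | ha
    · exact (stairs_of_nonpos ha).trans_le (stairs_nonneg hnonneg b)
    refine stairs_le_of_forall ha fun u hu => ?_
    rcases le_or_gt (b - 1) u with hbu | hub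
    · exact stairs_sub_one_add_le hbdd hb ⟨hbu, hu.2.trans hab⟩
    · calc stairs ξ (u - 1) + ξ u
        _ ≤ stairs ξ u := stairs_sub_one_add_le_self hbdd hzero u
        _ ≤ stairs ξ (b - 1) := ih (b - 1) le_rfl hub.le
        _ ≤ stairs ξ (b - 1) + ξ b := le_add_of_nonneg_right (hnonneg b)
        _ ≤ stairs ξ b := stairs_sub_one_add_le_self hbdd hzero b

theorem stairs_le_stairs_add_stairs {a : ℝ} (hξ_nonneg : ∀ t, 0 ≤ ξ t) (hξ_zero : ∀ t ≤ 0, ξ t = 0)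
    (hξ_bdd : ∀ c, BddAbove (ξ '' Iic c)) (hη_nonneg : ∀ t, 0 ≤ η t)
    (hη_bdd : ∀ c, BddAbove (η '' Iic c)) (hle : ∀ t, a < t → ξ t ≤ η t) (t : ℝ) :
    stairs ξ t ≤ stairs ξ a + stairs η t := by
  induction t using real_unit_step_induction with
  | nonpos t ht =>
    rw [stairs_of_nonpos ht]
    exact add_nonneg (stairs_nonneg hξ_nonneg a) (stairs_nonneg hη_nonneg t)
  | step t ht ih =>
    refine stairs_le_of_forall ht fun u hu => ?_
    rcases le_or_gt u a with hua | hau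
    · calc stairs ξ (u - 1) + ξ u
        _ ≤ stairs ξ u := stairs_sub_one_add_le_self hξ_bdd hξ_zero u
        _ ≤ stairs ξ a := monotone_stairs hξ_nonneg hξ_zero hξ_bdd hua
        _ ≤ stairs ξ a + stairs η t := le_add_of_nonneg_right (stairs_nonneg hη_nonneg t)
    · calc stairs ξ (u - 1) + ξ u
        _ ≤ (stairs ξ a + stairs η (u - 1)) + η u :=
          add_le_add (ih (u - 1) (sub_le_sub_right hu.2 1)) (hle u hau)
        _ = stairs ξ a + (stairs η (u - 1) + η u) := add_assoc _ _ _
        _ ≤ stairs ξ a + stairs η t :=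
          add_le_add_right (stairs_sub_one_add_le hη_bdd ht hu) _

end Comparison

theorem stmt_12_general {ξ : ℝ → ℝ} (hnonneg : ∀ t, 0 ≤ ξ t) (hzero : ∀ t ≤ 0, ξ t = 0)
    (hbdd : ∀ c, BddAbove (ξ '' Iic c)) (a t : ℝ) :
    stairs ξ t ≤ stairs ξ a + stairs (fun u => if u ≤ a then 0 else ξ u) t := by
  have htrunc_nonneg (u : ℝ) : 0 ≤ if u ≤ a then 0 else ξ u := ite_nonneg le_rfl (hnonneg u)
  have htrunc_le (u : ℝ) : (if u ≤ a then 0 else ξ u) ≤ ξ u := by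
    split_ifs
    exacts [hnonneg u, le_rfl]
  have htrunc_bdd (c : ℝ) : BddAbove ((fun u => if u ≤ a then 0 else ξ u) '' Iic c) :=
    let ⟨C, hC⟩ := hbdd c
    ⟨C, forall_mem_image.2 fun u hu => (htrunc_le u).trans (hC (mem_image_of_mem ξ hu))⟩
  exact stairs_le_stairs_add_stairs hnonneg hzero hbdd htrunc_nonneg htrunc_bdd
    (fun u hau => (if_neg hau.not_ge).ge) t

/-- with `ξ^n` the truncation of `ξ` vanishing on `(-∞, n]`, the stairs
functional is subadditive: `R_ξ(m) ≤ R_ξ(n) + R_{ξ^n}(m)` for all integers `0 ≤ n ≤ m`. -/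
theorem stmt_12 (ξ : ℝ → ℝ) (hξ0 : ∀ t, 0 ≤ ξ t) (hξneg : ∀ t ≤ (0 : ℝ), ξ t = 0)
    (hξfin : ∀ a : ℝ, 0 < a → ∀ b c : ℝ, {t | t ∈ Set.Icc b c ∧ a ≤ ξ t}.Finite)
    (n m : ℕ) (hnm : n ≤ m) :
    stairs ξ m ≤ stairs ξ n + stairs (fun t => if t ≤ (n : ℝ) then 0 else ξ t) m := by
  exact stmt_12_general hξ0 hξneg
    (fun c => bddAbove_image_Iic_of_finite_superlevel one_pos (hξfin 1 one_pos 0 c) hξneg) n m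

end
end

section
/- Assume α = 1 and E[X] < ∞. Then, as N → ∞, v_N ~ (c_N / log₂ N) · ∫₁^∞ h(c_N)/h(c_N x) dx, i.e. the ratio of the two sides tends to 1. -/
open MeasureTheory ProbabilityTheory Real Filter Set

noncomputable section

/-- The tail `P(X > x) = 1/h(x)` of the random variable `X` under `P`. -/
def tail {Ω : Type*} [MeasurableSpace Ω] (P : Measure Ω) (X : Ω → ℝ) (x : ℝ) : ℝ :=
  (P {ω | x < X ω}).toReal

/-- Generalized inverse `h⁻¹(y)` of `h(x) = 1 / P(X > x)`. -/
def hinv {Ω : Type*} [MeasurableSpace Ω] (P : Measure Ω) (X : Ω → ℝ) (y : ℝ) : ℝ :=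
  sInf {x : ℝ | 0 ≤ x ∧ tail P X x ≤ y⁻¹}

/-- The scaling sequence `c_N = h⁻¹(2 N log₂ N)`. -/
def cN {Ω : Type*} [MeasurableSpace Ω] (P : Measure Ω) (X : Ω → ℝ) (N : ℕ) : ℝ :=
  hinv P X (2 * N * Real.logb 2 N)

/-!
The equivalent of `v_N` is asymptotic to `2N ∫ P(X > x) dx` over `x > c_N`, the mean total excess
over `c_N` of the `2N` jumps of one step, because `2N log₂ N * P(X > c_N) → 1`.

Upper bound: charge the excess of every jump to the whole population and truncate the jumps at
`c_N`. Selection can only decrease the sum of the exponential weights `exp (θ * position)`, whose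
mean is therefore multiplied at each step by at most `2 E[exp (θ min(X, c_N))]`. For
`θ = log N / (4 c_N)` this factor stays bounded, so the truncated jumps contribute `O(c_N / log N)`
to the speed, which is negligible since the Karamata integral tends to infinity.

Lower bound: jumps are nonnegative, so the descendants of a particle that made a big jump take over
the population within `⌈log₂ N⌉` steps. Hence during `(μ + 1) ⌈log₂ N⌉` steps the minimum advances
by at least the largest of the jumps made in the first `μ ⌈log₂ N⌉` of them. Counting only jumps
above `μ² c_N` costs nothing, as the integrated tail is slowly varying, and makes two such jumps in
the same block unlikely; the ratio is at least `(μ / (μ + 1))²` in the limit, and `μ` is arbitrary.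
-/

open scoped Topology Finset

section RegularVariation

variable {t : ℝ → ℝ} {ρ σ a b x : ℝ}

/-- `f` is regularly varying at `+∞` with index `ρ`; index `0` is slow variation. -/
def IsRegularlyVarying (f : ℝ → ℝ) (ρ : ℝ) : Prop :=
  ∀ l : ℝ, 0 < l → Tendsto (fun x => f (l * x) / f x) atTop (𝓝 (l ^ ρ))

lemma IsRegularlyVarying.pos_of_antitone (ht : IsRegularlyVarying t ρ) (hanti : Antitone t)
    (hnonneg : ∀ x, 0 ≤ t x) (x : ℝ) : 0 < t x := by
  have hlim := ht 1 one_pos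
  rw [one_rpow] at hlim
  obtain ⟨y, hy, hxy⟩ := ((hlim.eventually_ne one_ne_zero).and (eventually_ge_atTop x)).exists
  have hty : t y ≠ 0 := (div_ne_zero_iff.1 hy).2
  exact ((hnonneg y).lt_of_ne' hty).trans_le (hanti hxy)

-- Iterate `2 ^ σ * t x ≤ t (2 * x)` along the dyadic points `2 ^ n * x₀`.
lemma IsRegularlyVarying.exists_mul_rpow_le (ht : IsRegularlyVarying t ρ) (hanti : Antitone t)
    (hpos : ∀ x, 0 < t x) (hσρ : σ < ρ) (hσ : σ ≤ 0) :
    ∃ C > 0, ∀ᶠ x in atTop, C * x ^ σ ≤ t x := by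
  have hdouble : ∀ᶠ x in atTop, 2 ^ σ * t x ≤ t (2 * x) := by
    filter_upwards [(ht 2 two_pos).eventually_const_le
      (rpow_lt_rpow_of_exponent_lt one_lt_two hσρ)] with x hx
    exact (le_div_iff₀ (hpos x)).1 hx
  obtain ⟨x₀, hx₀⟩ := (hdouble.and (eventually_ge_atTop 1)).exists_forall_of_atTop
  have hx₀pos : 0 < x₀ := one_pos.trans_le (hx₀ x₀ le_rfl).2
  have hiter (n : ℕ) : (2 ^ σ) ^ n * t x₀ ≤ t (2 ^ n * x₀) := by
    induction n with
    | zero => simp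
    | succ n ih =>
      calc (2 ^ σ) ^ (n + 1) * t x₀ = 2 ^ σ * ((2 ^ σ) ^ n * t x₀) := by ring
        _ ≤ 2 ^ σ * t (2 ^ n * x₀) := by gcongr
        _ ≤ t (2 * (2 ^ n * x₀)) :=
          (hx₀ _ (le_mul_of_one_le_left hx₀pos.le (one_le_pow₀ one_le_two))).1
        _ = t (2 ^ (n + 1) * x₀) := by ring_nf
  refine ⟨2 ^ σ * t x₀ / x₀ ^ σ, by have := hpos x₀; positivity, ?_⟩
  filter_upwards [eventually_ge_atTop x₀] with x hx
  obtain ⟨n, hn, hn'⟩ := exists_nat_pow_near ((one_le_div hx₀pos).2 hx) (one_lt_two (α := ℝ))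
  calc 2 ^ σ * t x₀ / x₀ ^ σ * x ^ σ = 2 ^ σ * (x / x₀) ^ σ * t x₀ := by
        rw [div_rpow (hx₀pos.le.trans hx) hx₀pos.le]; ring
    _ ≤ 2 ^ σ * (2 ^ n) ^ σ * t x₀ := by
        gcongr 2 ^ σ * ?_ * _
        · exact (hpos x₀).le
        · exact rpow_le_rpow_of_nonpos (by positivity) hn hσ
    _ = (2 ^ σ) ^ (n + 1) * t x₀ := by
        rw [pow_succ (2 ^ σ), rpow_pow_comm zero_le_two, mul_comm (2 ^ σ)]
    _ ≤ t (2 ^ (n + 1) * x₀) := hiter (n + 1)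
    _ ≤ t x := hanti ((div_lt_iff₀ hx₀pos).1 hn').le

/-- The integral `∫₁^∞ t(xs)/t(x) ds`, i.e. the tail integral of `t` beyond `x` measured in
units of `x * t x`. By Karamata's theorem its growth detects the index of `t`. -/
def karamataIntegral (t : ℝ → ℝ) (x : ℝ) : ℝ :=
  ∫ s in Ioi (1 : ℝ), t (x * s) / t x

lemma integral_Ioi_eq_mul_karamataIntegral (hx : 0 < x) (htx : t x ≠ 0) :
    ∫ y in Ioi x, t y = x * t x * karamataIntegral t x := by
  have hscale := integral_comp_mul_left_Ioi t 1 hx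
  rw [mul_one, smul_eq_mul] at hscale
  rw [karamataIntegral, integral_div, hscale]
  field_simp

-- By Fatou's lemma, the integral is asymptotically at least `∫₁^∞ ds / s = ∞`.
lemma IsRegularlyVarying.tendsto_karamataIntegral (ht : IsRegularlyVarying t (-1))
    (hanti : Antitone t) (hpos : ∀ x, 0 < t x) (hint : IntegrableOn t (Ioi 0)) :
    Tendsto (karamataIntegral t) atTop atTop := by
  have hmeas (x : ℝ) : Measurable fun s => t (x * s) / t x :=
    (hanti.measurable.comp (measurable_const_mul x)).div_const _
  have hfatou : ∫⁻ s in Ioi (1 : ℝ), ENNReal.ofReal s⁻¹ ≤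
      liminf (fun x => ∫⁻ s in Ioi (1 : ℝ), ENNReal.ofReal (t (x * s) / t x)) atTop := by
    refine le_trans (setLIntegral_mono' measurableSet_Ioi fun s hs => ?_)
      (lintegral_liminf_le' fun x => (hmeas x).ennreal_ofReal.aemeasurable)
    have hlim := (ENNReal.continuous_ofReal.tendsto _).comp (ht s (one_pos.trans hs))
    rw [rpow_neg_one] at hlim
    simpa only [Function.comp_def, mul_comm s] using hlim.liminf_eq.ge
  have hdiverges : ∫⁻ s in Ioi (1 : ℝ), ENNReal.ofReal s⁻¹ = ⊤ := by
    by_contra h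
    refine not_integrableOn_Ioi_inv (a := 1)
      ⟨measurable_inv.aestronglyMeasurable,
        (hasFiniteIntegral_iff_ofReal ?_).2 (lt_top_iff_ne_top.2 h)⟩
    filter_upwards [ae_restrict_mem measurableSet_Ioi] with s hs
    exact inv_nonneg.2 (one_pos.trans hs).le
  rw [hdiverges, top_le_iff] at hfatou
  rw [← ENNReal.tendsto_ofReal_nhds_top]
  refine (tendsto_of_le_liminf_of_limsup_le hfatou.ge le_top).congr' ?_
  filter_upwards [eventually_gt_atTop 0] with x hx
  refine (ofReal_integral_eq_lintegral_ofReal ?_ (ae_of_all _ fun s => ?_)).symm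
  · have hintx : IntegrableOn t (Ioi (x * 1)) :=
      hint.mono_set (Ioi_subset_Ioi (by simpa using hx.le))
    exact ((integrableOn_Ioi_comp_mul_left_iff t 1 hx).2 hintx).div_const _
  · exact div_nonneg (hpos _).le (hpos x).le

lemma abs_integral_Ioi_sub_le (hanti : Antitone t) (hnonneg : ∀ x, 0 ≤ t x)
    (hint : IntegrableOn t (Ioi (min a b))) :
    |(∫ y in Ioi a, t y) - ∫ y in Ioi b, t y| ≤ t (min a b) * |b - a| := by
  rw [intervalIntegral.integral_Ioi_sub_Ioi' (hint.mono_set (Ioi_subset_Ioi (min_le_left a b)))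
    (hint.mono_set (Ioi_subset_Ioi (min_le_right a b)))]
  refine intervalIntegral.norm_integral_le_of_norm_le_const (f := t) fun y hy => ?_
  rw [norm_of_nonneg (hnonneg y)]
  exact hanti hy.1.le

lemma IsRegularlyVarying.integral_Ioi (ht : IsRegularlyVarying t (-1)) (hanti : Antitone t)
    (hpos : ∀ x, 0 < t x) (hint : IntegrableOn t (Ioi 0)) :
    IsRegularlyVarying (fun x => ∫ y in Ioi x, t y) 0 := by
  intro l hl
  set m := min l 1
  have hm : 0 < m := lt_min hl one_pos
  have hK := ht.tendsto_karamataIntegral hanti hpos hint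
  have hbound : Tendsto (fun x => t (m * x) / t x * |1 - l| / karamataIntegral t x) atTop (𝓝 0) :=
    ((ht m hm).mul_const _).div_atTop hK
  rw [rpow_zero, tendsto_iff_norm_sub_tendsto_zero]
  refine squeeze_zero' (.of_forall fun _ => norm_nonneg _) ?_ hbound
  filter_upwards [eventually_gt_atTop 0, hK.eventually_gt_atTop 0] with x hx hKx
  have hmin : min (l * x) x = m * x := by
    simp only [m, min_mul_of_nonneg l 1 hx.le, one_mul]
  have hdiff := abs_integral_Ioi_sub_le (a := l * x) (b := x) hanti (fun x => (hpos x).le)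
    (hint.mono_set (Ioi_subset_Ioi (by rw [hmin]; positivity)))
  have htx := hpos x
  have hell := integral_Ioi_eq_mul_karamataIntegral hx htx.ne'
  have hellpos : 0 < ∫ y in Ioi x, t y := by rw [hell]; positivity
  rw [div_sub_one hellpos.ne', norm_div, norm_of_nonneg hellpos.le, div_le_iff₀ hellpos]
  refine hdiff.trans_eq ?_
  rw [hell, hmin, ← one_sub_mul, abs_mul, abs_of_pos hx]
  field_simp

end RegularVariation

section Tail

variable {Ω : Type*} [MeasurableSpace Ω] {P : Measure Ω} {X Y : Ω → ℝ} {c θ : ℝ}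

lemma tail_nonneg (x : ℝ) : 0 ≤ tail P X x :=
  ENNReal.toReal_nonneg

lemma tail_eq_of_identDistrib (h : IdentDistrib X Y P P) : tail P X = tail P Y :=
  funext fun _ => congrArg ENNReal.toReal (h.measure_mem_eq measurableSet_Ioi)

lemma tail_antitone [IsFiniteMeasure P] : Antitone (tail P X) := fun _ _ hxy =>
  measureReal_mono fun _ hω => hxy.trans_lt hω

lemma tendsto_tail_atTop [IsProbabilityMeasure P] (hX : Measurable X) :
    Tendsto (tail P X) atTop (𝓝 0) := by
  have : IsProbabilityMeasure (P.map X) := Measure.isProbabilityMeasure_map hX.aemeasurable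
  have htail (x : ℝ) : tail P X x = 1 - cdf (P.map X) x := by
    rw [cdf_eq_real, ← probReal_compl_eq_one_sub measurableSet_Iic, compl_Iic,
      map_measureReal_apply hX measurableSet_Ioi]
    rfl
  rw [funext htail]
  simpa only [sub_self] using (tendsto_cdf_atTop (P.map X)).const_sub 1

lemma integrableOn_tail [IsFiniteMeasure P] (hX : Integrable X P) :
    IntegrableOn (tail P X) (Ioi 0) := by
  refine ⟨tail_antitone.measurable.aestronglyMeasurable,
    (hasFiniteIntegral_iff_ofReal (ae_of_all _ tail_nonneg)).2 ?_⟩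
  have hcake := lintegral_eq_lintegral_meas_lt P (ae_of_all P fun ω => le_max_right (X ω) 0)
    hX.pos_part.aemeasurable
  have heq : ∫⁻ s in Ioi (0 : ℝ), ENNReal.ofReal (tail P X s) =
      ∫⁻ s in Ioi (0 : ℝ), P {ω | s < max (X ω) 0} := by
    refine setLIntegral_congr_fun measurableSet_Ioi fun s hs => ?_
    simp only [lt_max_iff, (mem_Ioi.1 hs).not_gt, or_false]
    exact ENNReal.ofReal_toReal (measure_ne_top P _)
  rw [heq, ← hcake]
  exact hX.pos_part.lintegral_lt_top

lemma integral_max_sub_zero [IsFiniteMeasure P] (hX : Integrable X P) (c : ℝ) :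
    ∫ ω, max (X ω - c) 0 ∂P = ∫ x in Ioi c, tail P X x := by
  have hshift := (measurePreserving_add_left volume c).setIntegral_preimage_emb
    (measurableEmbedding_addLeft c) (tail P X) (Ioi c)
  rw [preimage_const_add_Ioi, sub_self] at hshift
  have hcake := (hX.sub (integrable_const c)).pos_part.integral_eq_integral_meas_lt
    (ae_of_all P fun ω => le_max_right _ _)
  simp only [Pi.sub_apply] at hcake
  rw [← hshift, hcake]
  refine setIntegral_congr_fun measurableSet_Ioi fun s hs => ?_
  simp only [lt_max_iff, (mem_Ioi.1 hs).not_gt, or_false, lt_sub_iff_add_lt']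
  rfl

lemma integrable_exp_mul_min [IsFiniteMeasure P] (hX : Measurable X) (hθ : 0 ≤ θ) :
    Integrable (fun ω => exp (θ * min (X ω) c)) P := by
  refine Integrable.of_bound (by fun_prop) (exp (θ * c)) (ae_of_all _ fun ω => ?_)
  rw [norm_of_nonneg (exp_pos _).le]
  gcongr
  exact min_le_right _ _

-- From `exp y ≤ 1 + y * exp y`, applied to `y = θ * min (X ω) c`.
lemma mgf_min_le [IsProbabilityMeasure P] (hX : Measurable X) (hX0 : ∀ ω, 0 ≤ X ω)
    (hXint : Integrable X P) (hθ : 0 ≤ θ) :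
    mgf (fun ω => min (X ω) c) P θ ≤ 1 + θ * exp (θ * c) * ∫ ω, X ω ∂P := by
  have hexp (y : ℝ) : exp y ≤ 1 + y * exp y := by
    have h := mul_le_mul_of_nonneg_right (one_sub_le_exp_neg y) (exp_pos y).le
    rw [← exp_add, neg_add_cancel, exp_zero] at h
    linarith
  have hpointwise (ω : Ω) : exp (θ * min (X ω) c) ≤ 1 + θ * exp (θ * c) * X ω :=
    calc exp (θ * min (X ω) c)
        ≤ 1 + θ * min (X ω) c * exp (θ * min (X ω) c) := hexp _
      _ ≤ 1 + θ * X ω * exp (θ * c) := by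
        gcongr 1 + ?_
        exact mul_le_mul (mul_le_mul_of_nonneg_left (min_le_left _ _) hθ)
          (exp_le_exp.2 (mul_le_mul_of_nonneg_left (min_le_right _ _) hθ)) (exp_pos _).le
          (mul_nonneg hθ (hX0 ω))
      _ = 1 + θ * exp (θ * c) * X ω := by ring
  calc mgf (fun ω => min (X ω) c) P θ
      ≤ ∫ ω, (1 + θ * exp (θ * c) * X ω) ∂P :=
        integral_mono (integrable_exp_mul_min hX hθ)
          ((integrable_const 1).add (hXint.const_mul _)) hpointwise
    _ = 1 + θ * exp (θ * c) * ∫ ω, X ω ∂P := by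
        rw [integral_add (integrable_const _) (hXint.const_mul _), integral_const_mul,
          integral_const, probReal_univ, one_smul]

end Tail

section GeneralizedInverse

variable {Ω : Type*} [MeasurableSpace Ω] {P : Measure Ω} {X : Ω → ℝ} {ρ x y : ℝ}

lemma inv_lt_tail_of_lt_hinv (hx : 0 ≤ x) (hxy : x < hinv P X y) : y⁻¹ < tail P X x := by
  by_contra! h
  have hle : hinv P X y ≤ x := csInf_le ⟨0, fun _ hz => hz.1⟩ ⟨hx, h⟩
  exact hle.not_gt hxy

variable [IsProbabilityMeasure P]

lemma le_hinv (hX : Measurable X) (hy : 0 < y) (hxy : y⁻¹ < tail P X x) : x ≤ hinv P X y := by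
  obtain ⟨z, hz⟩ := (((tendsto_tail_atTop (P := P) hX).eventually_le_const (inv_pos.2 hy)).and
    (eventually_ge_atTop 0)).exists
  refine le_csInf ⟨z, hz.2, hz.1⟩ fun z hz => ?_
  by_contra! hzx
  exact (hxy.trans_le (tail_antitone hzx.le)).not_ge hz.2

lemma tail_le_inv_of_hinv_lt (hX : Measurable X) (hy : 0 < y) (hxy : hinv P X y < x) :
    tail P X x ≤ y⁻¹ := by
  by_contra! h
  exact (le_hinv hX hy h).not_gt hxy

lemma tendsto_hinv_atTop (hX : Measurable X) (hpos : ∀ x, 0 < tail P X x) :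
    Tendsto (hinv P X) atTop atTop := by
  refine tendsto_atTop.2 fun x => ?_
  filter_upwards [eventually_gt_atTop 0,
    tendsto_inv_atTop_zero.eventually_lt_const (hpos x)] with y hy hxy
  exact le_hinv hX hy hxy

-- For `l < 1 < l'`, the value `1 / y` lies between the tails at `l' * hinv y` and `l * hinv y`.
lemma IsRegularlyVarying.tendsto_mul_tail_hinv (ht : IsRegularlyVarying (tail P X) ρ)
    (hX : Measurable X) :
    Tendsto (fun y => y * tail P X (hinv P X y)) atTop (𝓝 1) := by
  have hpos := ht.pos_of_antitone tail_antitone tail_nonneg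
  have hinv_atTop := tendsto_hinv_atTop hX hpos
  have hratio {l : ℝ} (hl : 0 < l) := ((ht l hl).comp hinv_atTop).inv₀ (rpow_pos_of_pos hl ρ).ne'
  have hlim : Tendsto (fun l : ℝ => (l ^ ρ)⁻¹) (𝓝 1) (𝓝 1) := by
    have h := (continuousAt_rpow_const 1 ρ (.inl one_ne_zero)).tendsto
    rw [one_rpow] at h
    simpa only [inv_one] using h.inv₀ one_ne_zero
  refine tendsto_order.2 ⟨fun a ha => ?_, fun a ha => ?_⟩
  · obtain ⟨l, hal, hl0, hl1⟩ := (((hlim.mono_left nhdsWithin_le_nhds).eventually_const_lt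
      ha).and (Ioo_mem_nhdsLT one_pos)).exists
    filter_upwards [(hratio hl0).eventually_const_lt hal, eventually_gt_atTop 0,
      hinv_atTop.eventually_gt_atTop 0] with y hy hy0 hc
    have hlt := inv_lt_tail_of_lt_hinv (mul_pos hl0 hc).le (mul_lt_of_lt_one_left hc hl1)
    refine hy.trans ?_
    simp only [Function.comp_apply, inv_div]
    rw [div_lt_iff₀ (hpos _), mul_right_comm]
    exact lt_mul_of_one_lt_left (hpos _) ((inv_lt_iff_one_lt_mul₀' hy0).1 hlt)
  · obtain ⟨l, hal, hl1⟩ := (((hlim.mono_left (nhdsWithin_le_nhds (s := Ioi 1))).eventually_lt_const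
      ha).and self_mem_nhdsWithin).exists
    have hl0 : 0 < l := one_pos.trans hl1
    filter_upwards [(hratio hl0).eventually_lt_const hal, eventually_gt_atTop 0,
      hinv_atTop.eventually_gt_atTop 0] with y hy hy0 hc
    have hle := tail_le_inv_of_hinv_lt hX hy0 (lt_mul_of_one_lt_left hc hl1)
    refine lt_of_le_of_lt ?_ hy
    simp only [Function.comp_apply, inv_div]
    rw [le_div_iff₀ (hpos _), mul_right_comm]
    refine mul_le_of_le_one_left (hpos _).le ?_
    exact (mul_le_mul_of_nonneg_left hle hy0.le).trans_eq (mul_inv_cancel₀ hy0.ne')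

end GeneralizedInverse

section SelectionStep

variable {N : ℕ} {pos : Fin N → ℝ} {jump : Fin N → Fin 2 → ℝ} {x : ℝ}

/-- The positions of the `2 * N` children of the particles at `pos`, before selection. -/
def children (pos : Fin N → ℝ) (jump : Fin N → Fin 2 → ℝ) (p : Fin N × Fin 2) : ℝ :=
  pos p.1 + jump p.1 p.2

/-- The number of particles at or to the right of the level `x`. -/
def countAbove {ι : Type*} [Fintype ι] (x : ℝ) (pos : ι → ℝ) : ℕ :=
  #{i | x ≤ pos i}

lemma card_le_countAbove_iff {ι : Type*} [Fintype ι] {pos : ι → ℝ} :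
    Fintype.card ι ≤ countAbove x pos ↔ ∀ i, x ≤ pos i := by
  rw [countAbove, ← Finset.card_univ, (Finset.card_filter_le _ _).ge_iff_eq,
    Finset.card_filter_eq_iff]
  simp

lemma le_getD_iff_countP_lt_le {l : List ℝ} (hl : l.Pairwise (· ≤ ·)) {k : ℕ}
    (hk : k < l.length) : x ≤ l.getD k 0 ↔ l.countP (· < x) ≤ k := by
  induction l generalizing k with
  | nil => simp at hk
  | cons a l ih =>
    rw [List.pairwise_cons] at hl
    by_cases hax : a < x
    · rw [List.countP_cons_of_pos (by simpa using hax)]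
      cases k with
      | zero => simpa using hax
      | succ k => simpa using ih hl.2 (by simpa using hk)
    · have hcount : (a :: l).countP (· < x) = 0 := by
        rw [List.countP_eq_zero]
        intro b hb
        rcases List.mem_cons.1 hb with rfl | hb
        · simpa using hax
        · simpa using (not_lt.1 hax).trans (hl.1 b hb)
      have hmem : (a :: l).getD k 0 ∈ a :: l := by
        rw [List.getD_eq_getElem _ _ hk]
        exact List.getElem_mem hk
      rw [hcount]
      simpa using (List.countP_eq_zero.1 hcount) _ hmem

lemma le_brwStep_iff {i : Fin N} :
    x ≤ brwStep N pos jump i ↔ #{p | children pos jump p < x} ≤ N + i := by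
  rw [brwStep, le_getD_iff_countP_lt_le (Multiset.pairwise_sort _ _) (by simp; omega),
    ← Multiset.coe_countP, Multiset.sort_eq, Multiset.countP_map]
  rfl

lemma sum_brwStep_le {f : ℝ → ℝ} (hf : ∀ x, 0 ≤ f x) :
    ∑ i, f (brwStep N pos jump i) ≤ ∑ p, f (children pos jump p) := by
  set l := ((Finset.univ : Finset (Fin N × Fin 2)).val.map (children pos jump)).sort (· ≤ ·) with hl
  have hlength : l.length = N + N := by simp [hl, mul_two]
  let e : Fin N ↪ Fin l.length := (Fin.natAddEmb N).trans (finCongr hlength.symm).toEmbedding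
  calc ∑ i, f (brwStep N pos jump i) = ∑ k ∈ Finset.univ.map e, f l[k] := by
        rw [Finset.sum_map]
        refine Finset.sum_congr rfl fun i _ => congrArg f ?_
        exact List.getD_eq_getElem _ _ _
    _ ≤ ∑ k : Fin l.length, f l[k] := Finset.sum_le_univ_sum_of_nonneg fun _ => hf _
    _ = (l.map f).sum := Fin.sum_univ_fun_getElem l f
    _ = ∑ p, f (children pos jump p) := by
        rw [← Multiset.sum_coe, ← Multiset.map_coe, hl, Multiset.sort_eq, Multiset.map_map]
        rfl

lemma min_countAbove_children_le :
    min N (countAbove x (children pos jump)) ≤ countAbove x (brwStep N pos jump) := by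
  set r := countAbove x (children pos jump)
  have hcompl : #{p | children pos jump p < x} + r = N + N := by
    have h := Finset.card_filter_add_card_filter_not (s := Finset.univ) (children pos jump · < x)
    simpa only [not_lt, Finset.card_univ, Fintype.card_prod, Fintype.card_fin, mul_two] using! h
  have hsubset : ({i : Fin N | (i : ℕ) < N - r} : Finset (Fin N))ᶜ ⊆
      ({i | x ≤ brwStep N pos jump i} : Finset (Fin N)) := by
    intro i hi
    simp only [Finset.mem_compl, Finset.mem_filter, Finset.mem_univ, true_and,
      le_brwStep_iff] at hi ⊢
    omega
  have hcard := Finset.card_le_card hsubset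
  rw [Finset.card_compl, Fin.card_filter_val_lt, Fintype.card_fin] at hcard
  exact le_trans (by omega) hcard

lemma two_mul_countAbove_le (hjump : ∀ i j, 0 ≤ jump i j) :
    2 * countAbove x pos ≤ countAbove x (children pos jump) := by
  calc 2 * countAbove x pos
      = #(({i | x ≤ pos i} : Finset (Fin N)) ×ˢ (Finset.univ : Finset (Fin 2))) := by
        simp [countAbove, mul_comm]
    _ ≤ countAbove x (children pos jump) := by
        refine Finset.card_le_card fun p hp => ?_
        simp only [Finset.mem_product, Finset.mem_filter, Finset.mem_univ, true_and,
          and_true] at hp ⊢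
        exact hp.trans (le_add_of_nonneg_right (hjump _ _))

end SelectionStep

section DeterministicDynamics

variable {N : ℕ} {x0 : Fin N → ℝ} {jump : ℕ → Fin N → Fin 2 → ℝ} {x : ℝ} {n k m T : ℕ}

lemma brwMin_le (n : ℕ) (i : Fin N) : brwMin N jump n ≤ brw N (fun _ => 0) jump n i :=
  ciInf_le (finite_range _).bddBelow i

lemma min_two_pow_mul_countAbove_le (hjump : ∀ k i j, 0 ≤ jump k i j) (n t : ℕ) :
    min N (2 ^ t * countAbove x (brw N x0 jump n)) ≤ countAbove x (brw N x0 jump (n + t)) := by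
  induction t with
  | zero => simp
  | succ t ih =>
    have hdouble := two_mul_countAbove_le (x := x) (pos := brw N x0 jump (n + t)) (hjump (n + t))
    have hselect := min_countAbove_children_le (x := x) (pos := brw N x0 jump (n + t))
      (jump := jump (n + t))
    refine le_trans ?_ hselect
    rw [pow_succ']
    grind

lemma le_brw_of_le (hjump : ∀ k i j, 0 ≤ jump k i j) (hx : ∀ i, x ≤ brw N x0 jump n i)
    (hnm : n ≤ m) (i : Fin N) : x ≤ brw N x0 jump m i := by
  obtain ⟨t, rfl⟩ := Nat.exists_eq_add_of_le hnm
  have hgrowth := min_two_pow_mul_countAbove_le (x := x) (x0 := x0) hjump n t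
  rw [← card_le_countAbove_iff, Fintype.card_fin] at hx
  refine card_le_countAbove_iff.1 ?_ i
  rw [Fintype.card_fin]
  refine le_trans (le_min le_rfl ?_) hgrowth
  exact hx.trans (Nat.le_mul_of_pos_left _ (by positivity))

lemma brw_nonneg (hjump : ∀ k i j, 0 ≤ jump k i j) (n : ℕ) (i : Fin N) :
    0 ≤ brw N (fun _ => 0) jump n i :=
  le_brw_of_le hjump (fun _ => le_rfl) (Nat.zero_le n) i

lemma brwMin_nonneg (hjump : ∀ k i j, 0 ≤ jump k i j) (n : ℕ) : 0 ≤ brwMin N jump n :=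
  Real.iInf_nonneg (brw_nonneg hjump n)

lemma brwMax_nonneg (hjump : ∀ k i j, 0 ≤ jump k i j) (n : ℕ) : 0 ≤ brwMax N jump n :=
  Real.iSup_nonneg (brw_nonneg hjump n)

-- The descendants of a particle at level `x` fill the whole population within `T` generations.
lemma brwMin_add_jump_le (hjump : ∀ k i j, 0 ≤ jump k i j) (hN : N ≤ 2 ^ T) (hnk : n ≤ k)
    (hkm : k + 1 + T ≤ m) (i : Fin N) (j : Fin 2) :
    brwMin N jump n + jump k i j ≤ brwMin N jump m := by
  set x := brwMin N jump n + jump k i j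
  have hchild : x ≤ children (brw N (fun _ => 0) jump k) (jump k) (i, j) :=
    add_le_add_left (le_brw_of_le hjump (brwMin_le n) hnk i) _
  have hone : 0 < countAbove x (brw N (fun _ => 0) jump (k + 1)) := by
    refine lt_of_lt_of_le (lt_min i.pos ?_) min_countAbove_children_le
    exact Finset.card_pos.2 ⟨(i, j), by simpa using hchild⟩
  have hfill := min_two_pow_mul_countAbove_le (x := x) (x0 := fun _ => 0) hjump (k + 1) T
  rw [min_eq_left (hN.trans (Nat.le_mul_of_pos_right _ hone))] at hfill
  have : Nonempty (Fin N) := ⟨i⟩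
  refine le_ciInf fun i' => le_brw_of_le hjump (card_le_countAbove_iff.1 ?_) hkm i'
  rwa [Fintype.card_fin]

end DeterministicDynamics

section IIDCopies

variable {Ω ι κ β γ : Type*} {ζ : ι → Ω → ℝ} {S T : Set ι}

/-- The σ-algebra of the events that depend only on the variables `ζ i` with `i ∈ S`. -/
abbrev sigmaOf (ζ : ι → Ω → ℝ) (S : Set ι) : MeasurableSpace Ω :=
  ⨆ i ∈ S, MeasurableSpace.comap (ζ i) inferInstance

lemma measurable_sigmaOf {i : ι} (hi : i ∈ S) : Measurable[sigmaOf ζ S] (ζ i) :=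
  (comap_measurable (ζ i)).mono (le_iSup₂_of_le i hi le_rfl) le_rfl

variable [MeasurableSpace Ω] {P : Measure Ω} {X : Ω → ℝ} {A : ℝ}

/-- The random variables `ζ i` are measurable, independent, and distributed as `X`. -/
structure IsIIDCopies (P : Measure Ω) (X : Ω → ℝ) (ζ : ι → Ω → ℝ) : Prop where
  measurable (i : ι) : Measurable (ζ i)
  identDistrib (i : ι) : IdentDistrib (ζ i) X P P
  iIndepFun : iIndepFun ζ P

lemma IsIIDCopies.indepFun_of_disjoint [MeasurableSpace β] [MeasurableSpace γ]
    (hζ : IsIIDCopies P X ζ) (hST : Disjoint S T) {f : Ω → β} {g : Ω → γ}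
    (hf : Measurable[sigmaOf ζ S] f) (hg : Measurable[sigmaOf ζ T] g) : IndepFun f g P := by
  rw [IndepFun_iff_Indep]
  refine indep_of_indep_of_le_left (indep_of_indep_of_le_right ?_ hg.comap_le) hf.comap_le
  exact indep_iSup_of_disjoint (fun i => (hζ.measurable i).comap_le) hζ.iIndepFun hST

lemma IsIIDCopies.precomp (hζ : IsIIDCopies P X ζ) {e : κ → ι} (he : e.Injective) :
    IsIIDCopies P X fun k => ζ (e k) where
  measurable k := hζ.measurable (e k)
  identDistrib k := hζ.identDistrib (e k)
  iIndepFun := hζ.iIndepFun.precomp he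

lemma integrable_iSup [Finite ι] (hζ : ∀ i, Integrable (ζ i) P) :
    Integrable (fun ω => ⨆ i, ζ i ω) P := by
  have := Fintype.ofFinite ι
  refine Integrable.mono' (integrable_finsetSum Finset.univ fun i _ => (hζ i).norm)
    (AEMeasurable.iSup fun i => (hζ i).aemeasurable).aestronglyMeasurable (ae_of_all _ fun ω => ?_)
  have hle (i : ι) : ‖ζ i ω‖ ≤ ∑ i, ‖ζ i ω‖ :=
    Finset.single_le_sum (f := fun i => ‖ζ i ω‖) (fun _ _ => norm_nonneg _) (Finset.mem_univ i)
  cases isEmpty_or_nonempty ι with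
  | inl _ => simp
  | inr hι =>
    have i := hι.some
    refine abs_le.2 ⟨?_, ciSup_le fun i => (le_norm_self _).trans (hle i)⟩
    exact (neg_le_of_abs_le (hle i)).trans
      (le_ciSup (f := fun i => ζ i ω) (finite_range _).bddAbove i)

lemma IsIIDCopies.strong_law_iSup [Finite κ] {ζ : ℕ × κ → Ω → ℝ} (hζ : IsIIDCopies P X ζ)
    (hX : Integrable X P) :
    ∀ᵐ ω ∂P, Tendsto (fun n : ℕ => (∑ b ∈ Finset.range n, ⨆ q, ζ (b, q) ω) / n) atTop
      (𝓝 (∫ ω, ⨆ q, ζ (0, q) ω ∂P)) := by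
  refine strong_law_ae_real (fun b ω => ⨆ q, ζ (b, q) ω)
    (integrable_iSup fun q => (hζ.identDistrib (0, q)).integrable_iff.2 hX) ?_ fun b => ?_
  · intro b b' hbb'
    have hmeas (b : ℕ) : Measurable[sigmaOf ζ (Prod.fst ⁻¹' {b})] fun ω => ⨆ q, ζ (b, q) ω :=
      Measurable.iSup fun q => measurable_sigmaOf rfl
    exact hζ.indepFun_of_disjoint
      (Disjoint.preimage _ (disjoint_singleton.2 hbb')) (hmeas b) (hmeas b')
  · have hrow (b : ℕ) : IsIIDCopies P X fun q => ζ (b, q) := hζ.precomp (Prod.mk_right_injective b)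
    have hjoint := IdentDistrib.pi
      (fun q => (hζ.identDistrib (b, q)).trans (hζ.identDistrib (0, q)).symm)
      (hrow b).iIndepFun (hrow 0).iIndepFun
    exact hjoint.comp (Measurable.iSup measurable_pi_apply)

lemma IsIIDCopies.tail_iSup [Fintype ι] [Nonempty ι] (hζ : IsIIDCopies P X ζ) (x : ℝ) :
    tail P (fun ω => ⨆ i, ζ i ω) x = 1 - (1 - tail P X x) ^ Fintype.card ι := by
  have := hζ.iIndepFun.isProbabilityMeasure
  have hcompl : {ω | x < ⨆ i, ζ i ω} = (⋂ i, ζ i ⁻¹' Iic x)ᶜ := by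
    ext ω
    simp only [mem_ofPred_eq, mem_compl_iff, mem_iInter, mem_preimage, mem_Iic,
      ← ciSup_le_iff (finite_range fun i => ζ i ω).bddAbove, not_le]
  have hle (i : ι) : (P (ζ i ⁻¹' Iic x)).toReal = 1 - tail P X x := by
    rw [← tail_eq_of_identDistrib (hζ.identDistrib i)]
    have h := probReal_compl_eq_one_sub (μ := P)
      (hζ.measurable i (measurableSet_Ioi (a := x)))
    rwa [← preimage_compl, compl_Ioi] at h
  have hinter : P.real (⋂ i, ζ i ⁻¹' Iic x) = (1 - tail P X x) ^ Fintype.card ι := by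
    rw [measureReal_def, hζ.iIndepFun.meas_iInter fun i => ⟨Iic x, measurableSet_Iic, rfl⟩,
      ENNReal.toReal_prod]
    simp only [hle, Finset.prod_const, Finset.card_univ]
  rw [← hinter, ← probReal_compl_eq_one_sub
    (MeasurableSet.iInter fun i => hζ.measurable i measurableSet_Iic), ← hcompl]
  rfl

lemma mul_div_one_add_mul_le {p : ℝ} (hp0 : 0 ≤ p) (hp1 : p ≤ 1) (m : ℕ) :
    m * p / (1 + m * p) ≤ 1 - (1 - p) ^ m := by
  have hprod : (1 - p) ^ m * (1 + m * p) ≤ 1 :=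
    calc (1 - p) ^ m * (1 + m * p) ≤ (1 - p) ^ m * (1 + p) ^ m := by
          gcongr
          exact one_add_mul_le_pow (by linarith) m
      _ = (1 - p ^ 2) ^ m := by rw [← mul_pow]; ring
      _ ≤ 1 := pow_le_one₀ (by nlinarith) (by nlinarith)
  rw [div_le_iff₀ (by positivity)]
  linarith

lemma IsIIDCopies.le_integral_iSup [Fintype ι] [Nonempty ι] (hζ : IsIIDCopies P X ζ)
    (hζ0 : ∀ i ω, 0 ≤ ζ i ω) (hX : Integrable X P) (hA : 0 ≤ A) :
    Fintype.card ι * (∫ x in Ioi A, tail P X x) / (1 + Fintype.card ι * tail P X A) ≤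
      ∫ ω, ⨆ i, ζ i ω ∂P := by
  have := hζ.iIndepFun.isProbabilityMeasure
  set m := Fintype.card ι
  have hint : Integrable (fun ω => ⨆ i, ζ i ω) P :=
    integrable_iSup fun i => (hζ.identDistrib i).integrable_iff.2 hX
  have hA' : Ioi A ⊆ Ioi 0 := Ioi_subset_Ioi hA
  have htail (x : ℝ) (hx : x ∈ Ioi A) :
      m * tail P X x / (1 + m * tail P X A) ≤ tail P (fun ω => ⨆ i, ζ i ω) x := by
    rw [hζ.tail_iSup]
    have hx0 := tail_nonneg (P := P) (X := X) x
    have hxA : tail P X x ≤ tail P X A := tail_antitone (le_of_lt hx)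
    refine le_trans ?_ (mul_div_one_add_mul_le hx0 measureReal_le_one _)
    gcongr
  calc m * (∫ x in Ioi A, tail P X x) / (1 + m * tail P X A)
      = ∫ x in Ioi A, m * tail P X x / (1 + m * tail P X A) := by
        rw [integral_div, integral_const_mul]
    _ ≤ ∫ x in Ioi A, tail P (fun ω => ⨆ i, ζ i ω) x :=
        setIntegral_mono_on ((((integrableOn_tail hX).mono_set hA').const_mul _).div_const _)
          ((integrableOn_tail hint).mono_set hA') measurableSet_Ioi htail
    _ = ∫ ω, max ((⨆ i, ζ i ω) - A) 0 ∂P := (integral_max_sub_zero hint A).symm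
    _ ≤ ∫ ω, ⨆ i, ζ i ω ∂P :=
        integral_mono (hint.sub (integrable_const A)).pos_part hint fun ω =>
          max_le (sub_le_self _ hA) (Real.iSup_nonneg fun i => hζ0 i ω)

end IIDCopies

section LowerBound

variable {Ω ι : Type*} [MeasurableSpace Ω] {P : Measure Ω} {X : Ω → ℝ} {N S T : ℕ}
  {ζ : ℕ × Fin N × Fin 2 → Ω → ℝ} {jump : ℕ → Fin N → Fin 2 → ℝ} {v A : ℝ}

/-- The jumps of the `N`-BRW realized at the sample point `ω`. -/
def jumpsAt (ζ : ℕ × Fin N × Fin 2 → Ω → ℝ) (ω : Ω) (k : ℕ) (i : Fin N) (j : Fin 2) : ℝ :=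
  ζ (k, i, j) ω

/-- Time is cut into blocks of length `S + T`: `blockIndex S T (b, s, i)` is the index `i` at time
`s` of the block `b`. Only the first `S` times of a block are covered; the last `T` are the time
that the winner of the block needs to take over the population. -/
def blockIndex (S T : ℕ) (p : ℕ × Fin S × ι) : ℕ × ι :=
  (p.1 * (S + T) + p.2.1, p.2.2)

lemma blockIndex_injective : (blockIndex (ι := ι) S T).Injective := by
  rintro ⟨b, s, i⟩ ⟨b', s', i'⟩ h
  simp only [blockIndex, Prod.mk.injEq] at h
  obtain ⟨htime, rfl⟩ := h
  have hblock (b : ℕ) (s : Fin S) : (b * (S + T) + s) / (S + T) = b := by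
    rw [mul_comm, Nat.mul_add_div (by have := s.pos; omega), Nat.div_eq_of_lt (by omega), add_zero]
  have hbb' : b = b' := by rw [← hblock b s, ← hblock b' s', htime]
  subst hbb'
  rw [Fin.ext (Nat.add_left_cancel htime)]

lemma sum_iSup_le_brwMin [NeZero N] [NeZero S] (hjump : ∀ k i j, 0 ≤ jump k i j) (hN : N ≤ 2 ^ T)
    (B : ℕ) :
    ∑ b ∈ Finset.range B, ⨆ q : Fin S × Fin N × Fin 2,
        jump (b * (S + T) + q.1) q.2.1 q.2.2 ≤ brwMin N jump (B * (S + T)) := by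
  induction B with
  | zero => simpa using brwMin_nonneg hjump _
  | succ B ih =>
    rw [Finset.sum_range_succ, add_comm, ← le_sub_iff_add_le]
    refine ciSup_le fun q => ?_
    rw [le_sub_iff_add_le, add_comm]
    refine (add_le_add_left ih _).trans (brwMin_add_jump_le hjump hN (Nat.le_add_right _ _) ?_ _ _)
    rw [Nat.succ_mul]
    omega

lemma IsIIDCopies.integral_iSup_le_mul_speed [NeZero N] [NeZero S] (hζ : IsIIDCopies P X ζ)
    (hζ0 : ∀ p ω, 0 ≤ ζ p ω) (hX : Integrable X P) (hN : N ≤ 2 ^ T)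
    (hv : ∀ᵐ ω ∂P, Tendsto (fun n : ℕ => brwMin N (jumpsAt ζ ω) n / n) atTop (𝓝 v)) :
    ∫ ω, ⨆ q, ζ (blockIndex S T (0, q)) ω ∂P ≤ (S + T) * v := by
  have := hζ.iIndepFun.isProbabilityMeasure
  have hS : 0 < S := NeZero.pos S
  have hR : 0 < S + T := by omega
  obtain ⟨ω, hω, hslln⟩ := (hv.and ((hζ.precomp blockIndex_injective).strong_law_iSup hX)).exists
  have hblocks : Tendsto (fun B : ℕ => B * (S + T)) atTop atTop :=
    tendsto_id.atTop_mul_const' hR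
  refine le_of_tendsto_of_tendsto' hslln ((hω.comp hblocks).const_mul _) fun B => ?_
  calc (∑ b ∈ Finset.range B, ⨆ q, ζ (blockIndex S T (b, q)) ω) / B
      ≤ brwMin N (jumpsAt ζ ω) (B * (S + T)) / B := by
        gcongr
        exact sum_iSup_le_brwMin (fun k i j => hζ0 (k, i, j) ω) hN B
    _ = (S + T) * (brwMin N (jumpsAt ζ ω) (B * (S + T)) / (B * (S + T) : ℕ)) := by
        rcases eq_or_ne B 0 with rfl | hB
        · simp
        · push_cast
          have : (S + T : ℝ) ≠ 0 := by exact_mod_cast hR.ne'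
          field_simp

theorem IsIIDCopies.le_mul_speed [NeZero N] [NeZero S] (hζ : IsIIDCopies P X ζ)
    (hζ0 : ∀ p ω, 0 ≤ ζ p ω) (hX : Integrable X P) (hN : N ≤ 2 ^ T) (hA : 0 ≤ A)
    (hv : ∀ᵐ ω ∂P, Tendsto (fun n : ℕ => brwMin N (jumpsAt ζ ω) n / n) atTop (𝓝 v)) :
    (S * (2 * N) : ℕ) * (∫ x in Ioi A, tail P X x) / (1 + (S * (2 * N) : ℕ) * tail P X A) ≤
      (S + T) * v := by
  have hblock : IsIIDCopies P X fun q : Fin S × Fin N × Fin 2 => ζ (blockIndex S T (0, q)) :=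
    hζ.precomp (blockIndex_injective.comp (Prod.mk_right_injective 0))
  have hmax := hblock.le_integral_iSup (fun _ _ => hζ0 _ _) hX hA
  simp only [Fintype.card_prod, Fintype.card_fin, mul_comm N 2] at hmax
  exact hmax.trans (hζ.integral_iSup_le_mul_speed hζ0 hX hN hv)

end LowerBound

section UpperBound

variable {Ω : Type*} {N n : ℕ} {jump : ℕ → Fin N → Fin 2 → ℝ} {ζ : ℕ × Fin N × Fin 2 → Ω → ℝ}
  {c θ : ℝ}

/-- The total excess over the level `c` of all the jumps made before time `n`. -/
def totalExcess (c : ℝ) (jump : ℕ → Fin N → Fin 2 → ℝ) (n : ℕ) : ℝ :=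
  ∑ k ∈ Finset.range n, ∑ p : Fin N × Fin 2, max (jump k p.1 p.2 - c) 0

/-- The exponential weight at time `n` of the `i`-th particle, whose position is corrected by the
total excess over `c`, so that only the truncated jumps `min (jump k i j) c` matter. -/
def expWeight (θ c : ℝ) (jump : ℕ → Fin N → Fin 2 → ℝ) (n : ℕ) (i : Fin N) : ℝ :=
  exp (θ * (brw N (fun _ => 0) jump n i - totalExcess c jump n))

lemma expWeight_pos (i : Fin N) : 0 < expWeight θ c jump n i :=
  exp_pos _

-- The total excess grows by at least the excess of every single jump.
lemma sum_expWeight_succ_le (hθ : 0 ≤ θ) :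
    ∑ i, expWeight θ c jump (n + 1) i ≤
      ∑ p : Fin N × Fin 2, expWeight θ c jump n p.1 * exp (θ * min (jump n p.1 p.2) c) := by
  refine (sum_brwStep_le fun x => (exp_pos (θ * (x - totalExcess c jump (n + 1)))).le).trans ?_
  refine Finset.sum_le_sum fun p _ => ?_
  have hexcess : max (jump n p.1 p.2 - c) 0 ≤ ∑ p : Fin N × Fin 2, max (jump n p.1 p.2 - c) 0 :=
    Finset.single_le_sum (f := fun p : Fin N × Fin 2 => max (jump n p.1 p.2 - c) 0)
      (fun _ _ => le_max_right _ _) (Finset.mem_univ p)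
  have hsplit : jump n p.1 p.2 = min (jump n p.1 p.2) c + max (jump n p.1 p.2 - c) 0 := by
    rcases le_total (jump n p.1 p.2) c with h | h <;> simp [h]
  have htotal : totalExcess c jump (n + 1) =
      totalExcess c jump n + ∑ p : Fin N × Fin 2, max (jump n p.1 p.2 - c) 0 :=
    Finset.sum_range_succ _ _
  rw [expWeight, ← exp_add, ← mul_add, children, htotal]
  gcongr
  linarith

lemma brwMax_le_of_expWeight [NeZero N] (hθ : 0 < θ) :
    brwMax N jump n ≤ totalExcess c jump n + log (∑ i, expWeight θ c jump n i) / θ := by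
  refine ciSup_le fun i => ?_
  rw [← sub_le_iff_le_add', le_div_iff₀' hθ, le_log_iff_exp_le
    (Finset.sum_pos (fun i _ => expWeight_pos i) Finset.univ_nonempty)]
  exact Finset.single_le_sum (fun i _ => (expWeight_pos i).le) (Finset.mem_univ i)

-- The tangent line of `log` at the expected size `a` of the total weight `φ` bounds `log φ` by an
-- affine function of `φ`, whose expectation is known.
lemma brwMax_le_of_pos [NeZero N] (hθ : 0 < θ) {a : ℝ} (ha : 0 < a) :
    brwMax N jump n ≤ totalExcess c jump n + (∑ i, expWeight θ c jump n i) / (a * θ) +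
      (log a - 1) / θ := by
  set φ := ∑ i, expWeight θ c jump n i
  have hφ : 0 < φ := Finset.sum_pos (fun i _ => expWeight_pos i) Finset.univ_nonempty
  have htangent : log φ ≤ φ / a + (log a - 1) := by
    have := log_le_sub_one_of_pos (div_pos hφ ha)
    rw [log_div hφ.ne' ha.ne'] at this
    linarith
  calc brwMax N jump n ≤ totalExcess c jump n + log φ / θ := brwMax_le_of_expWeight hθ
    _ ≤ totalExcess c jump n + (φ / a + (log a - 1)) / θ := by gcongr
    _ = totalExcess c jump n + φ / (a * θ) + (log a - 1) / θ := by
        rw [add_div, div_div, add_assoc]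

variable {mΩ : MeasurableSpace Ω}

lemma measurable_brwStep {pos : Fin N → Ω → ℝ} {jump : Fin N → Fin 2 → Ω → ℝ}
    (hpos : ∀ i, Measurable (pos i)) (hjump : ∀ i j, Measurable (jump i j)) (i : Fin N) :
    Measurable fun ω => brwStep N (pos · ω) (jump · · ω) i := by
  refine measurable_of_Ici fun x => ?_
  simp only [preimage, mem_Ici, le_brwStep_iff, Finset.card_filter]
  refine measurableSet_le (Finset.measurable_sum _ fun p _ => ?_) measurable_const
  exact Measurable.ite (measurableSet_lt ((hpos _).add (hjump _ _)) measurable_const)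
    measurable_const measurable_const

lemma measurable_brw (hζ : ∀ p, p.1 < n → Measurable (ζ p)) (i : Fin N) :
    Measurable fun ω => brw N (fun _ => 0) (jumpsAt ζ ω) n i := by
  induction n generalizing i with
  | zero => exact measurable_const
  | succ n ih =>
    exact measurable_brwStep (ih fun p hp => hζ p (hp.trans n.lt_succ_self))
      (fun i j => hζ (n, i, j) n.lt_succ_self) i

lemma measurable_expWeight (hζ : ∀ p, p.1 < n → Measurable (ζ p)) (i : Fin N) :
    Measurable fun ω => expWeight θ c (jumpsAt ζ ω) n i := by
  refine measurable_exp.comp (((measurable_brw hζ i).sub ?_).const_mul θ)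
  refine Finset.measurable_sum _ fun k hk => Finset.measurable_sum _ fun p _ => ?_
  exact ((hζ (k, p) (Finset.mem_range.1 hk)).sub_const c).max measurable_const

variable {P : Measure Ω} {X : Ω → ℝ} {v : ℝ}

lemma IsIIDCopies.indepFun_expWeight (hζ : IsIIDCopies P X ζ) (i : Fin N) (p : Fin N × Fin 2) :
    IndepFun (fun ω => expWeight θ c (jumpsAt ζ ω) n i) (ζ (n, p)) P :=
  hζ.indepFun_of_disjoint (S := {p | p.1 < n}) (T := {(n, p)}) (by simp)
    (measurable_expWeight (fun _ hp => measurable_sigmaOf hp) i) (measurable_sigmaOf rfl)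

lemma IsIIDCopies.identDistrib_exp_mul_min (hζ : IsIIDCopies P X ζ) (p : ℕ × Fin N × Fin 2) :
    IdentDistrib (fun ω => exp (θ * min (ζ p ω) c)) (fun ω => exp (θ * min (X ω) c)) P P :=
  (hζ.identDistrib p).comp (u := fun x => exp (θ * min x c)) (by fun_prop)

lemma IsIIDCopies.indepFun_expWeight_exp (hζ : IsIIDCopies P X ζ) (p : Fin N × Fin 2) :
    IndepFun (fun ω => expWeight θ c (jumpsAt ζ ω) n p.1)
      (fun ω => exp (θ * min (ζ (n, p) ω) c)) P :=
  (hζ.indepFun_expWeight p.1 p).comp (φ := id) (ψ := fun x => exp (θ * min x c)) measurable_id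
    (by fun_prop)

lemma IsIIDCopies.integrable_expWeight_mul (hζ : IsIIDCopies P X ζ) (hX : Measurable X)
    (hθ : 0 ≤ θ) (p : Fin N × Fin 2)
    (hweight : Integrable (fun ω => expWeight θ c (jumpsAt ζ ω) n p.1) P) :
    Integrable (fun ω => expWeight θ c (jumpsAt ζ ω) n p.1 * exp (θ * min (ζ (n, p) ω) c)) P := by
  have := hζ.iIndepFun.isProbabilityMeasure
  exact (hζ.indepFun_expWeight_exp p).integrable_mul hweight
    ((hζ.identDistrib_exp_mul_min (n, p)).integrable_iff.2 (integrable_exp_mul_min hX hθ))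

lemma IsIIDCopies.integrable_expWeight (hζ : IsIIDCopies P X ζ) (hX : Measurable X)
    (hθ : 0 ≤ θ) (i : Fin N) : Integrable (fun ω => expWeight θ c (jumpsAt ζ ω) n i) P := by
  have := hζ.iIndepFun.isProbabilityMeasure
  induction n generalizing i with
  | zero => simp [expWeight, totalExcess, brw]
  | succ n ih =>
    refine Integrable.mono'
      (integrable_finsetSum Finset.univ fun p _ => hζ.integrable_expWeight_mul hX hθ p (ih p.1))
      (measurable_expWeight (fun p _ => hζ.measurable p) i).aestronglyMeasurable
      (ae_of_all _ fun ω => ?_)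
    rw [norm_of_nonneg (expWeight_pos i).le]
    exact (Finset.single_le_sum (fun i _ => (expWeight_pos i).le) (Finset.mem_univ i)).trans
      (sum_expWeight_succ_le hθ)

lemma IsIIDCopies.integral_expWeight_mul (hζ : IsIIDCopies P X ζ) (p : Fin N × Fin 2) :
    ∫ ω, expWeight θ c (jumpsAt ζ ω) n p.1 * exp (θ * min (ζ (n, p) ω) c) ∂P =
      (∫ ω, expWeight θ c (jumpsAt ζ ω) n p.1 ∂P) * mgf (fun ω => min (X ω) c) P θ := by
  have hζp := hζ.measurable (n, p)
  rw [(hζ.indepFun_expWeight_exp p).integral_fun_mul_eq_mul_integral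
    (measurable_expWeight (fun p _ => hζ.measurable p) p.1).aestronglyMeasurable
    (Measurable.aestronglyMeasurable (by fun_prop)),
    (hζ.identDistrib_exp_mul_min (n, p)).integral_eq]
  rfl

lemma IsIIDCopies.integral_sum_expWeight_le (hζ : IsIIDCopies P X ζ) (hX : Measurable X)
    (hθ : 0 ≤ θ) :
    ∫ ω, ∑ i, expWeight θ c (jumpsAt ζ ω) n i ∂P ≤
      N * (2 * mgf (fun ω => min (X ω) c) P θ) ^ n := by
  have := hζ.iIndepFun.isProbabilityMeasure
  set m := mgf (fun ω => min (X ω) c) P θ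
  have hm : 0 ≤ m := mgf_nonneg
  have hint (n : ℕ) (i : Fin N) : Integrable (fun ω => expWeight θ c (jumpsAt ζ ω) n i) P :=
    hζ.integrable_expWeight hX hθ i
  induction n with
  | zero => simp [expWeight, totalExcess, brw]
  | succ n ih =>
    have hchild (p : Fin N × Fin 2) := hζ.integrable_expWeight_mul hX hθ p (hint n p.1)
    calc ∫ ω, ∑ i, expWeight θ c (jumpsAt ζ ω) (n + 1) i ∂P
        ≤ ∫ ω, ∑ p : Fin N × Fin 2,
            expWeight θ c (jumpsAt ζ ω) n p.1 * exp (θ * min (ζ (n, p) ω) c) ∂P :=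
          integral_mono (integrable_finsetSum _ fun i _ => hint (n + 1) i)
            (integrable_finsetSum _ fun p _ => hchild p) fun ω => sum_expWeight_succ_le hθ
      _ = ∑ p : Fin N × Fin 2, (∫ ω, expWeight θ c (jumpsAt ζ ω) n p.1 ∂P) * m := by
          rw [integral_finsetSum _ fun p _ => hchild p]
          exact Finset.sum_congr rfl fun p _ => hζ.integral_expWeight_mul p
      _ = 2 * m * ∫ ω, ∑ i, expWeight θ c (jumpsAt ζ ω) n i ∂P := by
          rw [integral_finsetSum _ fun i _ => hint n i, Fintype.sum_prod_type]
          simp only [Finset.sum_const, Finset.card_univ, Fintype.card_fin, ← Finset.sum_mul,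
            ← Finset.mul_sum, nsmul_eq_mul]
          push_cast
          ring
      _ ≤ 2 * m * (N * (2 * m) ^ n) := by gcongr
      _ = N * (2 * m) ^ (n + 1) := by ring

lemma IsIIDCopies.integrable_excess (hζ : IsIIDCopies P X ζ) (hX : Integrable X P)
    (p : ℕ × Fin N × Fin 2) : Integrable (fun ω => max (ζ p ω - c) 0) P := by
  have := hζ.iIndepFun.isProbabilityMeasure
  exact (((hζ.identDistrib p).integrable_iff.2 hX).sub (integrable_const c)).pos_part

lemma IsIIDCopies.integrable_totalExcess (hζ : IsIIDCopies P X ζ) (hX : Integrable X P) :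
    Integrable (fun ω => totalExcess c (jumpsAt ζ ω) n) P :=
  integrable_finsetSum _ fun k _ => integrable_finsetSum _ fun p _ =>
    hζ.integrable_excess hX (k, p)

lemma IsIIDCopies.integral_totalExcess (hζ : IsIIDCopies P X ζ) (hX : Integrable X P) :
    ∫ ω, totalExcess c (jumpsAt ζ ω) n ∂P = n * (2 * N * ∫ x in Ioi c, tail P X x) := by
  have := hζ.iIndepFun.isProbabilityMeasure
  have hexcess (p : ℕ × Fin N × Fin 2) :
      ∫ ω, max (ζ p ω - c) 0 ∂P = ∫ x in Ioi c, tail P X x := by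
    simp only [integral_max_sub_zero ((hζ.identDistrib p).integrable_iff.2 hX),
      tail_eq_of_identDistrib (hζ.identDistrib p)]
  have hstep (k : ℕ) : ∫ ω, ∑ p : Fin N × Fin 2, max (ζ (k, p) ω - c) 0 ∂P =
      2 * N * ∫ x in Ioi c, tail P X x := by
    rw [integral_finsetSum _ fun p _ => hζ.integrable_excess hX (k, p)]
    simp only [hexcess, Finset.sum_const, Finset.card_univ, Fintype.card_prod, Fintype.card_fin,
      nsmul_eq_mul]
    push_cast
    ring
  refine (integral_finsetSum _ fun k _ => integrable_finsetSum _ fun p _ =>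
    hζ.integrable_excess hX (k, p)).trans ?_
  simp only [hstep, Finset.sum_const, Finset.card_range, nsmul_eq_mul]

lemma le_of_tendsto_of_integral_le {f g : ℕ → Ω → ℝ} {K : ℕ → ℝ} {k : ℝ} [IsProbabilityMeasure P]
    (hf : ∀ n ω, 0 ≤ f n ω) (hfg : ∀ n ω, f n ω ≤ g n ω) (hg : ∀ n, Integrable (g n) P)
    (hgK : ∀ n, ∫ ω, g n ω ∂P ≤ K n) (hK : Tendsto K atTop (𝓝 k))
    (hfv : ∀ᵐ ω ∂P, Tendsto (fun n => f n ω) atTop (𝓝 v)) : v ≤ k := by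
  have hliminf : ∀ᵐ ω ∂P, ENNReal.ofReal v ≤ liminf (fun n => ENNReal.ofReal (g n ω)) atTop := by
    filter_upwards [hfv] with ω hω
    rw [← (ENNReal.tendsto_ofReal hω).liminf_eq]
    exact liminf_le_liminf (Eventually.of_forall fun n => ENNReal.ofReal_le_ofReal (hfg n ω))
  have hk : 0 ≤ k := ge_of_tendsto' hK fun n =>
    (integral_nonneg fun ω => (hf n ω).trans (hfg n ω)).trans (hgK n)
  refine (ENNReal.ofReal_le_ofReal_iff hk).1 ?_
  calc ENNReal.ofReal v = ∫⁻ _, ENNReal.ofReal v ∂P := by simp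
    _ ≤ ∫⁻ ω, liminf (fun n => ENNReal.ofReal (g n ω)) atTop ∂P := lintegral_mono_ae hliminf
    _ ≤ liminf (fun n => ∫⁻ ω, ENNReal.ofReal (g n ω) ∂P) atTop :=
        lintegral_liminf_le' fun n => (hg n).aemeasurable.ennreal_ofReal
    _ ≤ liminf (fun n => ENNReal.ofReal (K n)) atTop := by
        refine liminf_le_liminf (Eventually.of_forall fun n => ?_)
        simp only [← ofReal_integral_eq_lintegral_ofReal (hg n)
          (ae_of_all _ fun ω => (hf n ω).trans (hfg n ω))]
        exact ENNReal.ofReal_le_ofReal (hgK n)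
    _ = ENNReal.ofReal k := (ENNReal.tendsto_ofReal hK).liminf_eq

lemma IsIIDCopies.integrable_weight_bound (hζ : IsIIDCopies P X ζ) (hX : Measurable X)
    (hXint : Integrable X P) (hθ : 0 ≤ θ) (a b : ℝ) :
    Integrable (fun ω => totalExcess c (jumpsAt ζ ω) n +
      (∑ i, expWeight θ c (jumpsAt ζ ω) n i) / a + b) P := by
  have := hζ.iIndepFun.isProbabilityMeasure
  exact ((hζ.integrable_totalExcess hXint).add ((integrable_finsetSum _ fun i _ =>
    hζ.integrable_expWeight hX hθ i).div_const a)).add (integrable_const b)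

lemma IsIIDCopies.integral_weight_bound_le (hζ : IsIIDCopies P X ζ) (hX : Measurable X)
    (hXint : Integrable X P) (hθ : 0 ≤ θ) {a : ℝ} (ha : 0 ≤ a) (b : ℝ) :
    ∫ ω, totalExcess c (jumpsAt ζ ω) n + (∑ i, expWeight θ c (jumpsAt ζ ω) n i) / a + b ∂P ≤
      n * (2 * N * ∫ x in Ioi c, tail P X x) +
        N * (2 * mgf (fun ω => min (X ω) c) P θ) ^ n / a + b := by
  have := hζ.iIndepFun.isProbabilityMeasure
  have hexcess := hζ.integrable_totalExcess (c := c) (n := n) hXint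
  have hweights : Integrable (fun ω => (∑ i, expWeight θ c (jumpsAt ζ ω) n i) / a) P :=
    (integrable_finsetSum _ fun i _ => hζ.integrable_expWeight hX hθ i).div_const a
  refine (integral_add (hexcess.add hweights) (integrable_const b)).trans_le ?_
  rw [integral_add' hexcess hweights, hζ.integral_totalExcess hXint, integral_div,
    integral_const, probReal_univ, one_smul]
  gcongr
  exact hζ.integral_sum_expWeight_le hX hθ

lemma tendsto_add_log_mul_pow_div {a b : ℝ} (ha : 0 < a) (hb : 0 < b) (x θ : ℝ) :
    Tendsto (fun n : ℕ => (n * x + log (a * b ^ n) / θ) / n) atTop (𝓝 (x + log b / θ)) := by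
  have hlim : Tendsto (fun n : ℕ => x + (log a / n + log b) / θ) atTop
      (𝓝 (x + (0 + log b) / θ)) :=
    (((tendsto_const_div_atTop_nhds_zero_nat (log a)).add_const (log b)).div_const θ).const_add x
  rw [zero_add] at hlim
  refine hlim.congr' ?_
  filter_upwards [eventually_ne_atTop 0] with n hn
  have hn' : (n : ℝ) ≠ 0 := Nat.cast_ne_zero.2 hn
  rw [log_mul ha.ne' (pow_pos hb n).ne', log_pow]
  field_simp

theorem IsIIDCopies.speed_le [NeZero N] (hζ : IsIIDCopies P X ζ) (hζ0 : ∀ p ω, 0 ≤ ζ p ω)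
    (hX : Measurable X) (hXint : Integrable X P) (hθ : 0 < θ)
    (hv : ∀ᵐ ω ∂P, Tendsto (fun n : ℕ => brwMax N (jumpsAt ζ ω) n / n) atTop (𝓝 v)) :
    v ≤ 2 * N * (∫ x in Ioi c, tail P X x) +
      log (2 * mgf (fun ω => min (X ω) c) P θ) / θ := by
  have := hζ.iIndepFun.isProbabilityMeasure
  set m := mgf (fun ω => min (X ω) c) P θ
  have hN : (0 : ℝ) < N := by exact_mod_cast NeZero.pos N
  have hm : 0 < 2 * m := mul_pos two_pos (mgf_pos (integrable_exp_mul_min hX hθ.le))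
  have hpos (n : ℕ) : 0 < N * (2 * m) ^ n := by positivity
  refine le_of_tendsto_of_integral_le (f := fun n ω => brwMax N (jumpsAt ζ ω) n / n)
    (fun n ω => div_nonneg (brwMax_nonneg (fun k i j => hζ0 (k, i, j) ω) n) n.cast_nonneg)
    (fun n ω => div_le_div_of_nonneg_right (brwMax_le_of_pos (c := c) hθ (hpos n)) n.cast_nonneg)
    (fun n => (hζ.integrable_weight_bound hX hXint hθ.le _ _).div_const n)
    (fun n => ?_) (tendsto_add_log_mul_pow_div hN hm _ θ) hv
  rw [integral_div]
  gcongr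
  refine (hζ.integral_weight_bound_le hX hXint hθ.le (mul_pos (hpos n) hθ).le _).trans_eq ?_
  have := (hpos n).ne'
  field_simp
  ring

end UpperBound

section Asymptotics

variable {Ω : Type*} [MeasurableSpace Ω] {P : Measure Ω} {X : Ω → ℝ} {ρ : ℝ}

/-- The equivalent `(c_N / log₂ N) ∫₁^∞ h(c_N) / h(c_N x) dx` of the speed of the `N`-BRW. -/
def asymptoticSpeed (P : Measure Ω) (X : Ω → ℝ) (N : ℕ) : ℝ :=
  cN P X N / logb 2 N * karamataIntegral (tail P X) (cN P X N)

lemma two_mul_integral_tail_eq {N : ℕ} (hN : logb 2 N ≠ 0) (hcN : 0 < cN P X N)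
    (htail : tail P X (cN P X N) ≠ 0) :
    2 * N * (∫ x in Ioi (cN P X N), tail P X x) =
      2 * N * logb 2 N * tail P X (cN P X N) * asymptoticSpeed P X N := by
  rw [integral_Ioi_eq_mul_karamataIntegral hcN htail, asymptoticSpeed]
  field_simp

lemma tendsto_logb_natCast_atTop : Tendsto (fun N : ℕ => logb 2 N) atTop atTop :=
  (tendsto_logb_atTop one_lt_two).comp tendsto_natCast_atTop_atTop

lemma tendsto_two_mul_mul_logb_atTop : Tendsto (fun N : ℕ => 2 * N * logb 2 N) atTop atTop :=
  (tendsto_natCast_atTop_atTop.const_mul_atTop two_pos).atTop_mul_atTop₀ tendsto_logb_natCast_atTop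

lemma tendsto_clog_div_logb :
    Tendsto (fun N : ℕ => (Nat.clog 2 N : ℝ) / logb 2 N) atTop (𝓝 1) := by
  have hceil := (tendsto_nat_ceil_div_atTop (R := ℝ)).comp tendsto_logb_natCast_atTop
  refine hceil.congr fun N => ?_
  have h := natCeil_logb_natCast 2 N
  rw [Nat.cast_ofNat] at h
  rw [Function.comp_apply, h]

variable [IsProbabilityMeasure P]

lemma IsRegularlyVarying.tail_pos (ht : IsRegularlyVarying (tail P X) ρ) (x : ℝ) :
    0 < tail P X x :=
  ht.pos_of_antitone tail_antitone tail_nonneg x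

lemma IsRegularlyVarying.tendsto_cN (ht : IsRegularlyVarying (tail P X) ρ) (hX : Measurable X) :
    Tendsto (cN P X) atTop atTop :=
  (tendsto_hinv_atTop hX ht.tail_pos).comp tendsto_two_mul_mul_logb_atTop

lemma IsRegularlyVarying.tendsto_mul_tail_cN (ht : IsRegularlyVarying (tail P X) ρ)
    (hX : Measurable X) :
    Tendsto (fun N : ℕ => 2 * N * logb 2 N * tail P X (cN P X N)) atTop (𝓝 1) :=
  (ht.tendsto_mul_tail_hinv hX).comp tendsto_two_mul_mul_logb_atTop

lemma IsRegularlyVarying.isBigO_sqrt_cN (ht : IsRegularlyVarying (tail P X) ρ) (hρ : -2 < ρ)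
    (hX : Measurable X) : (fun N : ℕ => √N) =O[atTop] cN P X := by
  obtain ⟨C, hC, hbound⟩ := ht.exists_mul_rpow_le tail_antitone ht.tail_pos hρ (by norm_num)
  refine Asymptotics.IsBigO.of_bound √C⁻¹ ?_
  filter_upwards [(ht.tendsto_cN hX).eventually hbound, (ht.tendsto_cN hX).eventually_gt_atTop 0,
    (ht.tendsto_mul_tail_cN hX).eventually_le_const one_lt_two,
    tendsto_logb_natCast_atTop.eventually_ge_atTop 1] with N hCN hcN htail hlog
  rw [rpow_neg hcN.le, rpow_two] at hCN
  have hprod : 2 * N * (C * (cN P X N ^ 2)⁻¹) ≤ 2 :=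
    calc 2 * N * (C * (cN P X N ^ 2)⁻¹)
        ≤ 2 * N * logb 2 N * tail P X (cN P X N) := by
          exact mul_le_mul (le_mul_of_one_le_right (by positivity) hlog) hCN (by positivity)
            (by positivity)
      _ ≤ 2 := htail
  have hN : (N : ℝ) ≤ C⁻¹ * cN P X N ^ 2 := by
    field_simp at hprod ⊢
    linarith
  rw [norm_of_nonneg (sqrt_nonneg _), norm_of_nonneg hcN.le, ← sqrt_sq hcN.le,
    ← sqrt_mul (by positivity)]
  exact sqrt_le_sqrt hN

lemma IsRegularlyVarying.isLittleO_log_mul_exp_cN (ht : IsRegularlyVarying (tail P X) ρ)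
    (hρ : -2 < ρ) (hX : Measurable X) :
    (fun N : ℕ => log N * exp (log N / 4)) =o[atTop] cN P X := by
  refine Asymptotics.IsLittleO.trans_isBigO ?_ (ht.isBigO_sqrt_cN hρ hX)
  have hlog : (fun N : ℕ => log N) =o[atTop] fun N : ℕ => (N : ℝ) ^ (1 / 4 : ℝ) :=
    (isLittleO_log_rpow_atTop (by norm_num)).comp_tendsto tendsto_natCast_atTop_atTop
  refine (hlog.mul_isBigO (Asymptotics.isBigO_refl _ _)).congr' EventuallyEq.rfl ?_
  filter_upwards [eventually_gt_atTop 0] with N hN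
  have hN' : (0 : ℝ) < N := Nat.cast_pos.2 hN
  rw [rpow_def_of_pos hN', ← exp_add, sqrt_eq_rpow, rpow_def_of_pos hN']
  ring_nf

-- With `θ = log N / (4 c_N)`, the factor `exp (θ c_N) = N ^ (1/4)` is absorbed by `√N = O(c_N)`.
lemma IsRegularlyVarying.eventually_mgf_min_cN_le (ht : IsRegularlyVarying (tail P X) ρ)
    (hρ : -2 < ρ) (hX : Measurable X) (hX0 : ∀ ω, 0 ≤ X ω) (hXint : Integrable X P) :
    ∀ᶠ N : ℕ in atTop,
      mgf (fun ω => min (X ω) (cN P X N)) P (log N / (4 * cN P X N)) ≤ 2 := by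
  have hlim := (((ht.isLittleO_log_mul_exp_cN hρ hX).tendsto_div_nhds_zero.div_const 4).mul_const
    (∫ ω, X ω ∂P)).const_add 1
  rw [zero_div, zero_mul, add_zero] at hlim
  filter_upwards [hlim.eventually_le_const one_lt_two,
    (ht.tendsto_cN hX).eventually_gt_atTop 0] with N hN hcN
  refine (mgf_min_le hX hX0 hXint (by positivity)).trans (le_of_eq_of_le ?_ hN)
  have hexp : log N / (4 * cN P X N) * cN P X N = log N / 4 := by field_simp
  rw [hexp]
  field_simp

/-- Data of the `N`-BRW for all `N`: `ζ N` is the family of jumps of the `N`-BRW, which are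
nonnegative i.i.d. copies of `X`, and `v N` is its speed. -/
structure IsBRWFamily (P : Measure Ω) (X : Ω → ℝ) (ζ : (N : ℕ) → ℕ × Fin N × Fin 2 → Ω → ℝ)
    (v : ℕ → ℝ) : Prop where
  isIIDCopies (N : ℕ) : IsIIDCopies P X (ζ N)
  nonneg (N : ℕ) (p : ℕ × Fin N × Fin 2) (ω : Ω) : 0 ≤ ζ N p ω
  tendsto_brwMax (N : ℕ) (hN : 1 ≤ N) :
    ∀ᵐ ω ∂P, Tendsto (fun n : ℕ => brwMax N (jumpsAt (ζ N) ω) n / n) atTop (𝓝 (v N))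
  tendsto_brwMin (N : ℕ) (hN : 1 ≤ N) :
    ∀ᵐ ω ∂P, Tendsto (fun n : ℕ => brwMin N (jumpsAt (ζ N) ω) n / n) atTop (𝓝 (v N))

variable {ζ : (N : ℕ) → ℕ × Fin N × Fin 2 → Ω → ℝ} {v : ℕ → ℝ}

lemma IsRegularlyVarying.eventually_asymptoticSpeed_pos (ht : IsRegularlyVarying (tail P X) (-1))
    (hX : Measurable X) (hXint : Integrable X P) : ∀ᶠ N in atTop, 0 < asymptoticSpeed P X N := by
  have hkaramata := (ht.tendsto_karamataIntegral tail_antitone ht.tail_pos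
    (integrableOn_tail hXint)).comp (ht.tendsto_cN hX)
  filter_upwards [(ht.tendsto_cN hX).eventually_gt_atTop 0, hkaramata.eventually_gt_atTop 0,
    tendsto_logb_natCast_atTop.eventually_gt_atTop 0] with N hcN hkar hlog
  exact mul_pos (div_pos hcN hlog) hkar

lemma IsBRWFamily.eventually_div_asymptoticSpeed_le (hζ : IsBRWFamily P X ζ v)
    (ht : IsRegularlyVarying (tail P X) (-1)) (hX : Measurable X) (hX0 : ∀ ω, 0 ≤ X ω)
    (hXint : Integrable X P) : ∀ᶠ N in atTop, v N / asymptoticSpeed P X N ≤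
      2 * N * logb 2 N * tail P X (cN P X N) + 8 / karamataIntegral (tail P X) (cN P X N) := by
  filter_upwards [ht.eventually_asymptoticSpeed_pos hX hXint,
    ht.eventually_mgf_min_cN_le (by norm_num) hX hX0 hXint,
    (ht.tendsto_cN hX).eventually_gt_atTop 0,
    tendsto_logb_natCast_atTop.eventually_gt_atTop 0, eventually_gt_atTop 1]
    with N hspeed hmgf hcN hlogb hN
  have : NeZero N := ⟨by omega⟩
  have hlog : 0 < log N := log_pos (Nat.one_lt_cast.2 hN)
  have hkar : karamataIntegral (tail P X) (cN P X N) ≠ 0 := right_ne_zero_of_mul hspeed.ne'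
  have hθ : 0 < log N / (4 * cN P X N) := by positivity
  have hmgf_pos := mgf_pos (integrable_exp_mul_min (P := P) (c := cN P X N) hX hθ.le)
  rw [div_le_iff₀ hspeed]
  calc v N
      ≤ 2 * N * (∫ x in Ioi (cN P X N), tail P X x) +
          log (2 * 2) / (log N / (4 * cN P X N)) := by
        refine ((hζ.isIIDCopies N).speed_le (c := cN P X N) (hζ.nonneg N) hX hXint hθ
          (hζ.tendsto_brwMax N hN.le)).trans ?_
        gcongr
    _ = 2 * N * (∫ x in Ioi (cN P X N), tail P X x) + 8 * (cN P X N / logb 2 N) := by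
        rw [← pow_two, log_pow, logb]
        push_cast
        field_simp
        ring
    _ = _ := by
        rw [two_mul_integral_tail_eq hlogb.ne' hcN (ht.tail_pos _).ne', add_mul]
        congr 1
        rw [asymptoticSpeed]
        field_simp

lemma IsBRWFamily.eventually_div_asymptoticSpeed_lt (hζ : IsBRWFamily P X ζ v)
    (ht : IsRegularlyVarying (tail P X) (-1)) (hX : Measurable X) (hX0 : ∀ ω, 0 ≤ X ω)
    (hXint : Integrable X P) {b : ℝ} (hb : 1 < b) :
    ∀ᶠ N in atTop, v N / asymptoticSpeed P X N < b := by
  have hkaramata := (ht.tendsto_karamataIntegral tail_antitone ht.tail_pos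
    (integrableOn_tail hXint)).comp (ht.tendsto_cN hX)
  have hlim := (ht.tendsto_mul_tail_cN hX).add (hkaramata.const_div_atTop 8)
  rw [add_zero] at hlim
  filter_upwards [hζ.eventually_div_asymptoticSpeed_le ht hX hX0 hXint,
    hlim.eventually_lt_const hb] with N hle hlt
  exact hle.trans_lt hlt

/-- The lower bound for the ratio of the speed to `asymptoticSpeed` given by blocks of `μ ⌈log₂ N⌉`
steps, followed by `⌈log₂ N⌉` steps of takeover, when only jumps above `μ² c_N` are counted. -/
def speedRatioLowerBound (P : Measure Ω) (X : Ω → ℝ) (μ N : ℕ) : ℝ :=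
  μ / (μ + 1) * (2 * N * logb 2 N * tail P X (cN P X N)) *
      ((∫ x in Ioi (μ ^ 2 * cN P X N), tail P X x) / ∫ x in Ioi (cN P X N), tail P X x) /
    (1 + μ * (Nat.clog 2 N / logb 2 N) * (2 * N * logb 2 N * tail P X (cN P X N)) *
      (tail P X (μ ^ 2 * cN P X N) / tail P X (cN P X N)))

lemma IsRegularlyVarying.tendsto_speedRatioLowerBound (ht : IsRegularlyVarying (tail P X) (-1))
    (hX : Measurable X) (hXint : Integrable X P) {μ : ℕ} (hμ : 0 < μ) :
    Tendsto (speedRatioLowerBound P X μ) atTop (𝓝 ((μ / (μ + 1)) ^ 2)) := by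
  have hc := ht.tendsto_cN hX
  have htail := (ht (μ ^ 2) (by positivity)).comp hc
  have hintegral := (ht.integral_Ioi tail_antitone ht.tail_pos (integrableOn_tail hXint)
    (μ ^ 2) (by positivity)).comp hc
  rw [rpow_zero] at hintegral
  rw [rpow_neg_one] at htail
  have hU := ht.tendsto_mul_tail_cN hX
  have hlim := ((hU.const_mul (μ / (μ + 1) : ℝ)).mul hintegral).div
    ((((tendsto_clog_div_logb.const_mul (μ : ℝ)).mul hU).mul htail).const_add 1) (by positivity)
  have hvalue : (μ / (μ + 1) : ℝ) * 1 * 1 / (1 + μ * 1 * 1 * (μ ^ 2 : ℝ)⁻¹) =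
      (μ / (μ + 1) : ℝ) ^ 2 := by
    field_simp
  rw [← hvalue]
  exact hlim

lemma IsBRWFamily.eventually_speedRatioLowerBound_le (hζ : IsBRWFamily P X ζ v)
    (ht : IsRegularlyVarying (tail P X) (-1)) (hX : Measurable X) (hXint : Integrable X P)
    {μ : ℕ} (hμ : 0 < μ) :
    ∀ᶠ N in atTop, speedRatioLowerBound P X μ N ≤ v N / asymptoticSpeed P X N := by
  filter_upwards [ht.eventually_asymptoticSpeed_pos hX hXint,
    (ht.tendsto_cN hX).eventually_gt_atTop 0,
    tendsto_logb_natCast_atTop.eventually_gt_atTop 0, eventually_gt_atTop 1]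
    with N hspeed hcN hlogb hN
  have : NeZero N := ⟨by omega⟩
  have hclog : 0 < Nat.clog 2 N := Nat.clog_pos one_lt_two hN
  have : NeZero (μ * Nat.clog 2 N) := ⟨(Nat.mul_pos hμ hclog).ne'⟩
  have hkar : karamataIntegral (tail P X) (cN P X N) ≠ 0 := right_ne_zero_of_mul hspeed.ne'
  have hle := (hζ.isIIDCopies N).le_mul_speed (S := μ * Nat.clog 2 N) (hζ.nonneg N) hXint
    (Nat.le_pow_clog one_lt_two N) (A := μ ^ 2 * cN P X N) (by positivity)
    (hζ.tendsto_brwMin N hN.le)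
  have htail := ht.tail_pos (cN P X N)
  have htail' := ht.tail_pos (μ ^ 2 * cN P X N)
  push_cast at hle
  rw [le_div_iff₀ hspeed, speedRatioLowerBound,
    integral_Ioi_eq_mul_karamataIntegral hcN htail.ne', asymptoticSpeed]
  refine le_of_mul_le_mul_left (hle.trans_eq' ?_)
    (show (0 : ℝ) < μ * Nat.clog 2 N + Nat.clog 2 N by positivity)
  field_simp

lemma IsBRWFamily.eventually_lt_div_asymptoticSpeed (hζ : IsBRWFamily P X ζ v)
    (ht : IsRegularlyVarying (tail P X) (-1)) (hX : Measurable X) (hXint : Integrable X P) {b : ℝ}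
    (hb : b < 1) : ∀ᶠ N in atTop, b < v N / asymptoticSpeed P X N := by
  have hlim : Tendsto (fun μ : ℕ => ((μ : ℝ) / (μ + 1)) ^ 2) atTop (𝓝 1) := by
    simpa only [one_pow] using (tendsto_natCast_div_add_atTop (1 : ℝ)).pow 2
  obtain ⟨μ, hbμ, hμ⟩ := ((hlim.eventually_const_lt hb).and (eventually_gt_atTop 0)).exists
  filter_upwards [hζ.eventually_speedRatioLowerBound_le ht hX hXint hμ,
    (ht.tendsto_speedRatioLowerBound hX hXint hμ).eventually_const_lt hbμ] with N hle hlt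
  exact hlt.trans_le hle

theorem IsBRWFamily.tendsto_div_asymptoticSpeed (hζ : IsBRWFamily P X ζ v)
    (ht : IsRegularlyVarying (tail P X) (-1)) (hX : Measurable X) (hX0 : ∀ ω, 0 ≤ X ω)
    (hXint : Integrable X P) :
    Tendsto (fun N => v N / asymptoticSpeed P X N) atTop (𝓝 1) :=
  tendsto_order.2 ⟨fun _ hb => hζ.eventually_lt_div_asymptoticSpeed ht hX hXint hb,
    fun _ hb => hζ.eventually_div_asymptoticSpeed_lt ht hX hX0 hXint hb⟩

end Asymptotics

/-- if `α = 1` and `E[X] < ∞`, then as `N → ∞`,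
`v_N ~ (c_N / log₂ N) ∫₁^∞ h(c_N)/h(c_N x) dx`, i.e. the ratio of the two sides tends to `1`
(note `h(c_N)/h(c_N x) = P(X > c_N x)/P(X > c_N)`). Here `v_N` is the almost-sure limit of
`X_N(n)/n` and of `X_1(n)/n` for the `N`-particle system. -/
theorem stmt_15 {Ω : Type*} [MeasurableSpace Ω] (P : Measure Ω) [IsProbabilityMeasure P]
    (X : Ω → ℝ) (hXmeas : Measurable X) (hXpos : ∀ ω, 0 ≤ X ω)
    (hXint : Integrable X P)
    (hRV : ∀ l : ℝ, 0 < l →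
      Tendsto (fun x => tail P X x / tail P X (l * x)) atTop (nhds (l ^ (1 : ℝ))))
    (ξ : (N : ℕ) → ℕ → Fin N → Fin 2 → Ω → ℝ)
    (hξmeas : ∀ N n i j, Measurable (ξ N n i j))
    (hξpos : ∀ N n i j ω, 0 ≤ ξ N n i j ω)
    (hξdist : ∀ N n i j, Measure.map (ξ N n i j) P = Measure.map X P)
    (hξindep : ∀ N, iIndepFun
      (fun p : ℕ × Fin N × Fin 2 => ξ N p.1 p.2.1 p.2.2) P)
    (v : ℕ → ℝ)
    (hv : ∀ N : ℕ, 1 ≤ N →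
      (∀ᵐ ω ∂P, Tendsto
        (fun n : ℕ => brwMax N (fun k i j => ξ N k i j ω) n / n) atTop (nhds (v N))) ∧
      (∀ᵐ ω ∂P, Tendsto
        (fun n : ℕ => brwMin N (fun k i j => ξ N k i j ω) n / n) atTop (nhds (v N)))) :
    Tendsto (fun N : ℕ =>
      v N / ((cN P X N / Real.logb 2 N) *
        ∫ x in Set.Ioi (1 : ℝ), tail P X (cN P X N * x) / tail P X (cN P X N)))
      atTop (nhds 1) := by
  have ht : IsRegularlyVarying (tail P X) (-1) := fun l hl => by
    simpa only [inv_div, ← rpow_neg hl.le] using (hRV l hl).inv₀ (rpow_pos_of_pos hl 1).ne'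
  have hξ : IsBRWFamily P X (fun N p => ξ N p.1 p.2.1 p.2.2) v :=
    { isIIDCopies := fun N =>
        { measurable := fun _ => hξmeas N _ _ _
          identDistrib := fun _ =>
            ⟨(hξmeas N _ _ _).aemeasurable, hXmeas.aemeasurable, hξdist N _ _ _⟩
          iIndepFun := hξindep N }
      nonneg := fun N _ => hξpos N _ _ _
      tendsto_brwMax := fun N hN => (hv N hN).1
      tendsto_brwMin := fun N hN => (hv N hN).2 }
  exact hξ.tendsto_div_asymptoticSpeed ht hXmeas hXpos hXint

end
end
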